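/- arXiv:2509.13097 — 2 statements merged into one kernel-verified Lean document; each statement's English description precedes it below -/
import Mathlib

section
/- There exists an involution φ̂ on S_n such that for every σ ∈ S_n, (31̲2(σ), 231̲(σ)) = (31̲2(φ̂(σ)), 213̲(φ̂(σ))); that is, φ̂ preserves the statistic \underline{31}2 and exchanges the statistics 2\underline{31} and 2\underline{13}. -/
namespace Paper

variable {n : ℕ}

/-- The 1-based position corresponding to `i : Fin n`. -/
def pv (i : Fin n) : ℕ := (i : ℕ) + 1

/-- The 1-based letter of the word `f` at 1-based position `k` (0 if out of range). -/
def valAt (f : Fin n → Fin n) (k : ℕ) : ℕ :=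
  if h : 1 ≤ k ∧ k ≤ n then ((f ⟨k - 1, by omega⟩ : Fin n) : ℕ) + 1 else 0

/-- The map θ̂ : the 1-based `i`-th letter of `hatTheta f` is `σ̂_{n+1-i}`,
where `σ̂ₐ = n - a` (1-based) if `a < n` and `n̂ = n`. (0-based encoding.) -/
def hatTheta (f : Fin n → Fin n) (i : Fin n) : Fin n :=
  if ((f i.rev : ℕ)) = n - 1 then f i.rev
  else ⟨n - 2 - (f i.rev : ℕ), by have := i.isLt; omega⟩

end Paper

namespace Paper

variable {n : ℕ}

/-- 2\underline{13}(σ) = #{(ℓ,j) : σ⁻¹(ℓ) < j < n, σⱼ < ℓ < σ_{j+1}} (1-based). -/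
def stat2_13 (σ : Equiv.Perm (Fin n)) : ℕ :=
  (Finset.univ.filter (fun p : Fin n × Fin n =>
    pv (σ.symm p.1) < pv p.2 ∧ pv p.2 < n ∧
    valAt ⇑σ (pv p.2) < pv p.1 ∧ pv p.1 < valAt ⇑σ (pv p.2 + 1))).card

/-- 2\underline{31}(σ) = #{(ℓ,j) : σ⁻¹(ℓ) < j < n, σ_{j+1} < ℓ < σⱼ} (1-based). -/
def stat2_31 (σ : Equiv.Perm (Fin n)) : ℕ :=
  (Finset.univ.filter (fun p : Fin n × Fin n =>
    pv (σ.symm p.1) < pv p.2 ∧ pv p.2 < n ∧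
    valAt ⇑σ (pv p.2 + 1) < pv p.1 ∧ pv p.1 < valAt ⇑σ (pv p.2))).card

/-- \underline{31}2(σ) = #{(ℓ,j) : 1 < j < σ⁻¹(ℓ), σⱼ < ℓ < σ_{j-1}} (1-based). -/
def stat31_2 (σ : Equiv.Perm (Fin n)) : ℕ :=
  (Finset.univ.filter (fun p : Fin n × Fin n =>
    1 < pv p.2 ∧ pv p.2 < pv (σ.symm p.1) ∧
    valAt ⇑σ (pv p.2) < pv p.1 ∧ pv p.1 < valAt ⇑σ (pv p.2 - 1))).card

/-- \underline{13}2(σ) = #{(ℓ,j) : 1 < j < σ⁻¹(ℓ), σ_{j-1} < ℓ < σⱼ} (1-based). -/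
def stat13_2 (σ : Equiv.Perm (Fin n)) : ℕ :=
  (Finset.univ.filter (fun p : Fin n × Fin n =>
    1 < pv p.2 ∧ pv p.2 < pv (σ.symm p.1) ∧
    valAt ⇑σ (pv p.2 - 1) < pv p.1 ∧ pv p.1 < valAt ⇑σ (pv p.2))).card

end Paper


namespace Paper

open Finset

open scoped Classical in
/-- Starters at level `m`. -/
noncomputable def ST (P : ℕ → ℕ) (n m : ℕ) : Finset ℕ :=
  (range n).filter (fun y => y < m ∧ ∃ x < n, m ≤ x ∧ P x + 1 = P y)

def Nx (P : ℕ → ℕ) (n l : ℕ) : Prop := ∃ y < n, y < l ∧ P y = P l + 1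
def Pv (P : ℕ → ℕ) (n l : ℕ) : Prop := ∃ x < n, l < x ∧ P x + 1 = P l

open scoped Classical in
noncomputable def cc (P : ℕ → ℕ) (n l : ℕ) : ℕ :=
  ((range n).filter (fun y => y < l ∧ P y < P l ∧ ∃ x < n, l < x ∧ P x + 1 = P y)).card

open scoped Classical in
noncomputable def aa (P : ℕ → ℕ) (n l : ℕ) : ℕ :=
  ((range n).filter (fun y => y < l ∧ P l < P y ∧ ∃ x < n, l < x ∧ P x + 1 = P y)).card

open scoped Classical in
noncomputable def dd (P : ℕ → ℕ) (n l : ℕ) : ℕ :=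
  ((range n).filter (fun y => y < l ∧ P l < P y ∧ ∃ x < n, l < x ∧ P y + 1 = P x)).card

open scoped Classical in
noncomputable def nx (P : ℕ → ℕ) (n l : ℕ) : Bool := decide (Nx P n l)
open scoped Classical in
noncomputable def pr (P : ℕ → ℕ) (n l : ℕ) : Bool := decide (Pv P n l)

/-- `P` restricts to a bijection of `{0,…,n-1}`. -/
structure Good (P : ℕ → ℕ) (n : ℕ) : Prop where
  inj : ∀ x < n, ∀ y < n, P x = P y → x = y
  lt : ∀ x < n, P x < n
  surj : ∀ i < n, ∃ x < n, P x = i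

theorem starter {P : ℕ → ℕ} {n : ℕ} (H : Good P n) {l : ℕ} (hl : l < n) :
    ∀ k x, P x = k → x < n → x < l → P l < P x → ∃ y ∈ ST P n l, P l < P y ∧ P y ≤ P x := by
  intro k
  induction k with
  | zero => intro x h1 h2 h3 h4; omega
  | succ k ih =>
    intro x h1 h2 h3 h4
    have := H.lt x h2
    obtain ⟨z, hz, hz'⟩ := H.surj k (by omega)
    by_cases hzl : l ≤ z
    · exact ⟨x, by simp only [ST, mem_filter, mem_range]; exact ⟨h2, h3, z, hz, hzl, by omega⟩, h4, le_rfl⟩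
    · have hne : P z ≠ P l := fun h => by have := H.inj z hz l hl h; omega
      obtain ⟨y, hy, h5, h6⟩ := ih z hz' hz (by omega) (by omega)
      exact ⟨y, hy, h5, by omega⟩

theorem card_nx {P : ℕ → ℕ} {n : ℕ} (H : Good P n) {l : ℕ} (hl : l < n) :
    ((ST P n l).filter (fun y => P y = P l + 1)).card = (nx P n l).toNat := by
  classical
  by_cases h : Nx P n l
  · obtain ⟨y, hy, hyl, e⟩ := id h
    simp only [nx, h, decide_true, Bool.toNat_true]
    rw [card_eq_one]
    refine ⟨y, ?_⟩
    ext z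
    simp only [ST, mem_filter, mem_range, mem_singleton]
    constructor
    · rintro ⟨⟨h1, _⟩, h2⟩
      exact H.inj z h1 y hy (by omega)
    · rintro rfl
      exact ⟨⟨hy, hyl, l, hl, le_rfl, e.symm⟩, e⟩
  · simp only [nx, h, decide_false, Bool.toNat_false, card_eq_zero]
    rw [filter_eq_empty_iff]
    intro y hy e
    simp only [ST, mem_filter, mem_range] at hy
    exact h ⟨y, hy.1, hy.2.1, e⟩

theorem cc_eq {P : ℕ → ℕ} {n : ℕ} {l : ℕ} :
    cc P n l = ((ST P n l).filter (fun y => P y < P l)).card := by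
  classical
  unfold cc ST
  rw [filter_filter]
  congr 1
  ext y
  simp only [mem_filter, mem_range]
  constructor
  · rintro ⟨h1, h2, h3, x, h4, h5, h6⟩
    exact ⟨h1, ⟨h2, x, h4, h5.le, h6⟩, h3⟩
  · rintro ⟨h1, ⟨h2, x, h4, h5, h6⟩, h3⟩
    refine ⟨h1, h2, h3, x, h4, lt_of_le_of_ne h5 ?_, h6⟩
    rintro rfl; omega

theorem aa_eq {P : ℕ → ℕ} {n : ℕ} (H : Good P n) {l : ℕ} (hl : l < n) :
    aa P n l = ((ST P n l).filter (fun y => P l + 1 < P y)).card := by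
  classical
  unfold aa ST
  rw [filter_filter]
  congr 1
  ext y
  simp only [mem_filter, mem_range]
  constructor
  · rintro ⟨h1, h2, h3, x, h4, h5, h6⟩
    refine ⟨h1, ⟨h2, x, h4, h5.le, h6⟩, ?_⟩
    have : P x ≠ P l := fun h => by have := H.inj x h4 l hl h; omega
    omega
  · rintro ⟨h1, ⟨h2, x, h4, h5, h6⟩, h3⟩
    refine ⟨h1, h2, by omega, x, h4, lt_of_le_of_ne h5 ?_, h6⟩
    rintro rfl; omega

theorem split_ST {P : ℕ → ℕ} {n : ℕ} (H : Good P n) {l : ℕ} (hl : l < n) :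
    cc P n l + aa P n l + (nx P n l).toNat = (ST P n l).card := by
  classical
  rw [cc_eq, aa_eq H hl, ← card_nx H hl]
  rw [← card_filter_add_card_filter_not (s := ST P n l) (fun y => P y < P l), add_assoc]
  congr 1
  rw [← card_filter_add_card_filter_not (s := (ST P n l).filter (fun y => ¬ P y < P l))
    (fun y => P l + 1 < P y), filter_filter, filter_filter]
  congr 2
  · ext y; simp only [mem_filter]; grind
  · ext y
    simp only [mem_filter]
    constructor
    · grind
    · rintro ⟨h1, h2, h3⟩
      refine ⟨h1, ?_⟩
      have hy : y < n ∧ y < l := by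
        simp only [ST, mem_filter, mem_range] at h1; exact ⟨h1.1, h1.2.1⟩
      have : P y ≠ P l := fun h => by have := H.inj y hy.1 l hl h; omega
      omega

theorem mem_ST_succ {P : ℕ → ℕ} {n : ℕ} (H : Good P n) {l : ℕ} (hl : l < n) (y : ℕ) :
    y ∈ ST P n (l + 1) ↔ (y ∈ ST P n l ∧ ¬ P y = P l + 1) ∨ (y = l ∧ Pv P n l) := by
  simp only [ST, mem_filter, mem_range, Pv]
  constructor
  · rintro ⟨h1, h2, x, h3, h4, h5⟩
    by_cases hy : y = l
    · subst hy; exact Or.inr ⟨rfl, x, h3, by omega, h5⟩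
    · refine Or.inl ⟨⟨h1, by omega, x, h3, by omega, h5⟩, fun h => ?_⟩
      have := H.inj x h3 l hl (by omega)
      omega
  · rintro (⟨⟨h1, h2, x, h3, h4, h5⟩, h6⟩ | ⟨rfl, x, h3, h4, h5⟩)
    · refine ⟨h1, by omega, x, h3, ?_, h5⟩
      by_contra hc
      have : x = l := by omega
      subst this; omega
    · exact ⟨hl, by omega, x, h3, by omega, h5⟩

theorem card_ST_succ {P : ℕ → ℕ} {n : ℕ} (H : Good P n) {l : ℕ} (hl : l < n) :
    (ST P n (l + 1)).card + (nx P n l).toNat = (ST P n l).card + (pr P n l).toNat := by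
  classical
  have hsplit := card_filter_add_card_filter_not (s := ST P n l) (fun y => P y = P l + 1)
  rw [card_nx H hl] at hsplit
  have hl' : l ∉ (ST P n l).filter (fun y => ¬ P y = P l + 1) := by
    simp [ST]
  by_cases h : Pv P n l
  · have : ST P n (l + 1) = insert l ((ST P n l).filter (fun y => ¬ P y = P l + 1)) := by
      ext y; rw [mem_ST_succ H hl]; simp only [mem_insert, mem_filter]; tauto
    rw [this, card_insert_of_notMem hl']
    simp only [pr, h, decide_true, Bool.toNat_true]
    omega
  · have : ST P n (l + 1) = ((ST P n l).filter (fun y => ¬ P y = P l + 1)) := by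
      ext y; rw [mem_ST_succ H hl]; simp only [mem_filter]; tauto
    rw [this]
    simp only [pr, h, decide_false, Bool.toNat_false]
    omega

theorem ST_zero (P : ℕ → ℕ) (n : ℕ) : ST P n 0 = ∅ := by
  simp [ST]

theorem ST_top (P : ℕ → ℕ) (n : ℕ) : ST P n n = ∅ := by
  unfold ST
  rw [filter_eq_empty_iff]
  rintro y - ⟨_, x, h1, h2, _⟩
  omega

/-- the last letter -/
theorem last_nx {P : ℕ → ℕ} {n : ℕ} (H : Good P n) {b : ℕ} (hP : P b + 1 = n) :
    nx P n b = false := by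
  simp only [nx, decide_eq_false_iff_not]
  rintro ⟨y, h1, _, h2⟩
  have := H.lt y h1; omega

theorem last_aa {P : ℕ → ℕ} {n : ℕ} (H : Good P n) {b : ℕ} (hP : P b + 1 = n) :
    aa P n b = 0 := by
  unfold aa
  rw [card_eq_zero, filter_eq_empty_iff]
  rintro y hy ⟨_, h2, _⟩
  have := H.lt y (mem_range.1 hy); omega

theorem last_dd {P : ℕ → ℕ} {n : ℕ} (H : Good P n) {b : ℕ} (hP : P b + 1 = n) :
    dd P n b = 0 := by
  unfold dd
  rw [card_eq_zero, filter_eq_empty_iff]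
  rintro y hy ⟨_, h2, _⟩
  have := H.lt y (mem_range.1 hy); omega

theorem pr_top {P : ℕ → ℕ} {n : ℕ} : pr P (n + 1) n = false := by
  simp only [pr, decide_eq_false_iff_not]
  rintro ⟨x, h1, h2, _⟩; omega

end Paper

namespace Paper

open Finset

theorem crossing (Q : ℕ → ℕ) (l s : ℕ) : ∀ k, (∀ i, s ≤ i → i ≤ s + k → Q i ≠ l) →
    ((Ico s (s + k)).filter (fun i => Q i < l ∧ l < Q (i + 1))).card + (if l < Q s then 1 else 0)
    = ((Ico s (s + k)).filter (fun i => l < Q i ∧ Q (i + 1) < l)).card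
      + (if l < Q (s + k) then 1 else 0) := by
  intro k
  induction k with
  | zero => intro _; simp
  | succ k ih =>
    intro h
    have ih := ih (fun i h1 h2 => h i h1 (by omega))
    have e1 := h (s + k) (by omega) (by omega)
    have e2 := h (s + k + 1) (by omega) (by omega)
    have hI : Ico s (s + (k + 1)) = insert (s + k) (Ico s (s + k)) := by
      ext i; simp only [mem_Ico, mem_insert]; omega
    rw [hI, filter_insert, filter_insert, ← add_assoc]
    have hn : ∀ p : ℕ → Prop, [DecidablePred p] → s + k ∉ (Ico s (s + k)).filter p := by
      intro p _; simp
    split_ifs at * <;> (try rw [card_insert_of_notMem (hn _)]) <;> (try omega)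

theorem dd_aa {P : ℕ → ℕ} {n : ℕ} (H : Good P n) {b : ℕ} (hb : b < n) (hP : P b + 1 = n)
    {l : ℕ} (hl : l < n) (hlb : l ≠ b) :
    dd P n l + 1 = aa P n l + (nx P n l).toNat + (if l < b then 1 else 0) := by
  classical
  have hQ : ∃ Q : ℕ → ℕ, ∀ i < n, Q i < n ∧ P (Q i) = i := by
    refine ⟨fun i => if h : i < n then (H.surj i h).choose else 0, fun i h => ?_⟩
    simp only [h, dif_pos]
    exact (H.surj i h).choose_spec
  obtain ⟨Q, hQ⟩ := hQ
  have hQP : ∀ x < n, Q (P x) = x := fun x hx =>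
    H.inj _ (hQ _ (H.lt x hx)).1 _ hx (hQ _ (H.lt x hx)).2
  have hPl : P l + 1 < n := by
    have := H.lt l hl
    have : P l ≠ P b := fun h => hlb (H.inj l hl b hb h)
    omega
  obtain ⟨k, hk⟩ : ∃ k, n = P l + 1 + k + 1 := ⟨n - (P l + 2), by omega⟩
  have key := crossing Q l (P l + 1) k (by
    intro i h1 h2 h3
    have := (hQ i (by omega)).2
    rw [h3] at this; omega)
  have hbq : Q (P l + 1 + k) = b := by
    rw [← hQP b hb]; congr 1; omega
  rw [hbq] at key
  have hd : dd P n l = ((Ico (P l + 1) (P l + 1 + k)).filter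
      (fun i => Q i < l ∧ l < Q (i + 1))).card := by
    symm
    unfold dd
    refine card_bij (fun i _ => Q i) ?_ ?_ ?_
    · intro i hi
      simp only [mem_filter, mem_Ico, mem_range] at hi ⊢
      have h1 := hQ i (by omega)
      have h2 := hQ (i + 1) (by omega)
      exact ⟨h1.1, hi.2.1, by omega, Q (i + 1), h2.1, hi.2.2, by omega⟩
    · intro i hi j hj e
      simp only [mem_filter, mem_Ico] at hi hj
      rw [← (hQ i (by omega)).2, ← (hQ j (by omega)).2, e]
    · intro y hy
      simp only [mem_filter, mem_range] at hy
      obtain ⟨h1, h2, h3, x, h4, h5, h6⟩ := hy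
      have := H.lt x h4
      refine ⟨P y, ?_, hQP y h1⟩
      simp only [mem_filter, mem_Ico]
      rw [hQP y h1, h6, hQP x h4]
      omega
  have ha : aa P n l = ((Ico (P l + 1) (P l + 1 + k)).filter
      (fun i => l < Q i ∧ Q (i + 1) < l)).card := by
    symm
    unfold aa
    refine card_bij (fun i _ => Q (i + 1)) ?_ ?_ ?_
    · intro i hi
      simp only [mem_filter, mem_Ico, mem_range] at hi ⊢
      have h1 := hQ i (by omega)
      have h2 := hQ (i + 1) (by omega)
      exact ⟨h2.1, hi.2.2, by omega, Q i, h1.1, hi.2.1, by omega⟩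
    · intro i hi j hj e
      simp only [mem_filter, mem_Ico] at hi hj
      have := (hQ (i + 1) (by omega)).2
      have h2 := (hQ (j + 1) (by omega)).2
      have e : Q (i + 1) = Q (j + 1) := e
      rw [e] at this
      omega
    · intro y hy
      simp only [mem_filter, mem_range] at hy
      obtain ⟨h1, h2, h3, x, h4, h5, h6⟩ := hy
      have := H.lt y h1
      have : P x ≠ P l := fun h => by have := H.inj x h4 l hl h; omega
      refine ⟨P x, ?_, by rw [h6]; exact hQP y h1⟩
      simp only [mem_filter, mem_Ico]
      rw [h6, hQP y h1, hQP x h4]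
      omega
  have hnx : (nx P n l).toNat + (if l < Q (P l + 1) then 1 else 0) = 1 := by
    have h1 := hQ (P l + 1) hPl
    by_cases h : l < Q (P l + 1)
    · have : ¬ Nx P n l := by
        rintro ⟨y, hy, hyl, e⟩
        rw [← e, hQP y hy] at h; omega
      simp [nx, this, h]
    · have h3 : Q (P l + 1) ≠ l := fun h => by rw [h] at h1; omega
      have : Nx P n l := ⟨_, h1.1, by omega, h1.2⟩
      simp [nx, this, h]
  rw [hd, ha]
  omega

/-! Injectivity -/

theorem order_step {P : ℕ → ℕ} {n : ℕ} (H : Good P n) {l : ℕ} (hl : l < n) {x : ℕ} (hx : x < l) :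
    P x < P l ↔ ((ST P n l).filter (fun y => ¬ P x < P y)).card ≤ cc P n l := by
  rw [cc_eq]
  constructor
  · intro h
    apply card_le_card
    intro y; simp only [mem_filter]
    rintro ⟨h1, h2⟩; exact ⟨h1, by omega⟩
  · intro h
    by_contra hc
    have hne : P x ≠ P l := fun h => by have := H.inj x (by omega) l hl h; omega
    obtain ⟨y, hy, h1, h2⟩ := starter H hl _ x rfl (by omega) hx (by omega)
    have : ((ST P n l).filter (fun y => P y < P l)) ⊂
        ((ST P n l).filter (fun y => ¬ P x < P y)) := by
      rw [ssubset_iff_of_subset]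
      · exact ⟨y, by simp only [mem_filter]; exact ⟨hy, by omega⟩,
          by simp only [mem_filter]; omega⟩
      · intro z; simp only [mem_filter]
        rintro ⟨h1, h2⟩; exact ⟨h1, by omega⟩
    have := card_lt_card this
    omega

theorem next_iff {P : ℕ → ℕ} {n : ℕ} {l : ℕ} (hl : l < n) (y : ℕ) (hy : y ∈ ST P n l) :
    P y = P l + 1 ↔ nx P n l = true ∧ P l < P y ∧ ∀ z ∈ ST P n l, P l < P z → ¬ P z < P y := by
  have hy' := hy
  simp only [ST, mem_filter, mem_range] at hy'
  simp only [nx, decide_eq_true_eq]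
  constructor
  · intro h
    exact ⟨⟨y, hy'.1, hy'.2.1, h⟩, by omega, fun z _ _ => by omega⟩
  · rintro ⟨⟨z, h1, h2, h3⟩, h4, h5⟩
    have := h5 z (by simp only [ST, mem_filter, mem_range]
                     exact ⟨h1, h2, l, hl, le_rfl, h3.symm⟩) (by omega)
    omega

theorem inj_ind {P R : ℕ → ℕ} {n : ℕ} (H : Good P n) (K : Good R n)
    (h1 : ∀ l < n, nx P n l = nx R n l) (h2 : ∀ l < n, pr P n l = pr R n l)
    (h3 : ∀ l < n, cc P n l = cc R n l) :
    ∀ m ≤ n, (∀ x < m, ∀ y < m, (P x < P y ↔ R x < R y)) ∧ ST P n m = ST R n m := by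
  intro m
  induction m with
  | zero => intro _; exact ⟨by intro x h; omega, by rw [ST_zero, ST_zero]⟩
  | succ l ih =>
    intro hl
    have hl : l < n := by omega
    obtain ⟨ih1, ih2⟩ := ih hl.le
    have hlt : ∀ y ∈ ST P n l, y < l := by
      intro y hy; simp only [ST, mem_filter] at hy; exact hy.2.1
    have o1 : ∀ x < l, (P x < P l ↔ R x < R l) := by
      intro x hx
      rw [order_step H hl hx, order_step K hl hx, h3 l hl, ← ih2]
      rw [filter_congr (fun y hy => not_congr (ih1 x hx y (hlt y hy)))]
    have o2 : ∀ x < l, (P l < P x ↔ R l < R x) := by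
      intro x hx
      have a1 : P x ≠ P l := fun h => by have := H.inj x (by omega) l hl h; omega
      have a2 : R x ≠ R l := fun h => by have := K.inj x (by omega) l hl h; omega
      have := o1 x hx
      omega
    refine ⟨?_, ?_⟩
    · intro x hx y hy
      rcases Nat.lt_succ_iff_lt_or_eq.1 hx with hx | rfl <;>
        rcases Nat.lt_succ_iff_lt_or_eq.1 hy with hy | rfl
      · exact ih1 x hx y hy
      · exact o1 x hx
      · exact o2 y hy
      · simp
    · ext y
      rw [mem_ST_succ H hl, mem_ST_succ K hl]
      have hp : Pv P n l ↔ Pv R n l := by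
        have := h2 l hl
        simpa [pr] using this
      rw [hp, ← ih2]
      refine or_congr (and_congr_right fun hy => not_congr ?_) Iff.rfl
      rw [next_iff hl y hy, next_iff hl y (ih2 ▸ hy), h1 l hl, o2 y (hlt y hy), ← ih2]
      refine and_congr_right fun _ => and_congr_right fun _ => ?_
      refine forall₂_congr fun z hz => ?_
      rw [o2 z (hlt z hz), ih1 z (hlt z hz) y (hlt y hy)]

theorem inj_main {P R : ℕ → ℕ} {n : ℕ} (H : Good P n) (K : Good R n)
    (h1 : ∀ l < n, nx P n l = nx R n l) (h2 : ∀ l < n, pr P n l = pr R n l)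
    (h3 : ∀ l < n, cc P n l = cc R n l) : ∀ x < n, P x = R x := by
  have h := (inj_ind H K h1 h2 h3 n le_rfl).1
  have cnt : ∀ {S : ℕ → ℕ}, Good S n → ∀ x < n, S x = ((range n).filter (fun y => S y < S x)).card := by
    intro S G x hx
    have : ((range n).filter (fun y => S y < S x)).card = (range (S x)).card := by
      refine card_bij (fun y _ => S y) ?_ ?_ ?_
      · intro y hy; simp only [mem_filter] at hy; exact mem_range.2 hy.2
      · intro y hy z hz e
        simp only [mem_filter, mem_range] at hy hz
        exact G.inj y hy.1 z hz.1 e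
      · intro i hi
        have := G.lt x hx
        rw [mem_range] at hi
        obtain ⟨y, hy, e⟩ := G.surj i (by omega)
        exact ⟨y, by simp only [mem_filter, mem_range]; exact ⟨hy, by omega⟩, e⟩
    rw [this, card_range]
  intro x hx
  rw [cnt H x hx, cnt K x hx]
  congr 1
  apply filter_congr
  intro y hy
  exact h y (mem_range.1 hy) x hx

end Paper

namespace Paper

open Finset

abbrev Step := Bool × ℕ × ℕ × Bool

/-- Weighted lattice paths with `m` steps ending at height `k`. -/
def PP : ℕ → ℕ → Finset (List Step)
  | 0, k => if k = 0 then {[]} else ∅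
  | m + 1, k => (univ : Finset (Bool × Bool)).biUnion fun st =>
      ((PP m (k + 1 - st.2.toNat - st.1.toNat)) ×ˢ (range (k + 1 - st.2.toNat))).image
        fun Lc => (st.1, Lc.2, k + 1 - st.2.toNat - 1 - Lc.2, st.2) :: Lc.1

theorem PP_cons {m k k2 : ℕ} {L : List Step} (hL : L ∈ PP m k) (s t : Bool) (c a : ℕ)
    (h1 : c + a + 1 = k + s.toNat) (h2 : k2 + 1 = k + s.toNat + t.toNat) :
    (s, c, a, t) :: L ∈ PP (m + 1) k2 := by
  simp only [PP, mem_biUnion, mem_univ, true_and, mem_image, mem_product, mem_range, Prod.exists]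
  have e1 : k2 + 1 - t.toNat - s.toNat = k := by omega
  have e2 : k2 + 1 - t.toNat - 1 - c = a := by omega
  refine ⟨s, t, L, c, ⟨?_, ?_⟩, ?_⟩
  · simpa only [e1] using hL
  · omega
  · simp only [e2]

theorem PP_length {m : ℕ} : ∀ {k : ℕ} {L : List Step}, L ∈ PP m k → L.length = m := by
  induction m with
  | zero =>
    intro k L h
    simp only [PP] at h
    split_ifs at h <;> simp at h
    simp [h]
  | succ m ih =>
    intro k L h
    simp only [PP, mem_biUnion, mem_univ, true_and, mem_image, mem_product, Prod.exists] at h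
    obtain ⟨s, t, L', c, ⟨h1, _⟩, rfl⟩ := h
    simp [ih h1]

theorem card_PP (m : ℕ) : ∀ k, (PP m k).card ≤ m.factorial * m.choose k := by
  induction m with
  | zero =>
    intro k
    simp only [PP]
    split_ifs with h
    · simp [h]
    · simp
  | succ m ih =>
    intro k
    have hb : (PP (m + 1) k).card ≤ ∑ st : Bool × Bool,
        (PP m (k + 1 - st.2.toNat - st.1.toNat)).card * (k + 1 - st.2.toNat) := by
      rw [PP]
      refine card_biUnion_le.trans (sum_le_sum fun st _ => ?_)
      refine card_image_le.trans ?_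
      rw [card_product, card_range]
    refine hb.trans ?_
    rw [Fintype.sum_prod_type]
    simp only [Fintype.sum_bool, Bool.toNat_true, Bool.toNat_false, Nat.add_sub_cancel, Nat.sub_zero]
    rcases k with _ | k
    · have i1 := ih 0
      have i2 := ih 1
      simp at i1 i2 ⊢
      rw [Nat.factorial_succ]
      nlinarith
    · have i0 := ih k
      have i1 := ih (k + 1)
      have i2 := ih (k + 2)
      have c1 := Nat.choose_succ_succ m k
      have c2 := Nat.choose_succ_succ m (k + 1)
      have d1 := Nat.add_one_mul_choose_eq m k
      have d2 := Nat.add_one_mul_choose_eq m (k + 1)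
      simp only [Nat.succ_eq_add_one] at *
      have s1 : k + 1 + 1 - 1 = k + 1 := by omega
      simp only [Nat.add_sub_cancel] 
      rw [Nat.factorial_succ]
      calc _ ≤ (m.factorial * m.choose k) * (k + 1) + (m.factorial * m.choose (k+1)) * (k + 2)
            + ((m.factorial * m.choose (k+1)) * (k + 1)
            + (m.factorial * m.choose (k+2)) * (k + 2)) := by
              have := Nat.mul_le_mul_right (k + 1) i0
              have := Nat.mul_le_mul_right (k + 2) i1
              have := Nat.mul_le_mul_right (k + 1) i1
              have := Nat.mul_le_mul_right (k + 2) i2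
              linarith
        _ = m.factorial * ((m + 1).choose (k + 1) * (k + 1) + (m + 1).choose (k + 2) * (k + 2)) := by
              rw [c1, show k + 2 = k + 1 + 1 from rfl, c2]; ring
        _ = _ := by
              rw [← d1, show k + 2 = k + 1 + 1 from rfl, ← d2, c1]; ring

abbrev Code := List Step × List Step × ℕ

open scoped Classical in
/-- Codes for permutations of `{0,…,n}`. -/
noncomputable def Codes (n : ℕ) : Finset Code :=
  (range (n + 1)).biUnion fun m => (range (m + 1)).biUnion fun k =>
    (PP m k ×ˢ PP (n - m) k).image fun LL => (LL.1, LL.2, k)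

theorem vander (m j : ℕ) :
    ∑ k ∈ range (m + 1), m.choose k * j.choose k = (m + j).choose m := by
  rw [Nat.add_choose_eq, Finset.Nat.sum_antidiagonal_eq_sum_range_succ_mk, ← sum_range_reflect]
  refine sum_congr rfl fun k hk => ?_
  rw [mem_range] at hk
  simp only [Nat.add_sub_cancel]
  rw [Nat.choose_symm (by omega)]

theorem card_Codes (n : ℕ) : (Codes n).card ≤ (n + 1).factorial := by
  classical
  unfold Codes
  refine card_biUnion_le.trans ?_
  have : ∀ m ∈ range (n + 1), ((range (m + 1)).biUnion fun k =>
    (PP m k ×ˢ PP (n - m) k).image fun LL => ((LL.1, LL.2, k) : Code)).card ≤ n.factorial := by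
    intro m hm
    rw [mem_range] at hm
    refine card_biUnion_le.trans ?_
    calc _ ≤ ∑ k ∈ range (m + 1), (m.factorial * m.choose k) * ((n-m).factorial * (n-m).choose k) := by
            refine sum_le_sum fun k _ => card_image_le.trans ?_
            rw [card_product]
            exact Nat.mul_le_mul (card_PP _ _) (card_PP _ _)
      _ = m.factorial * (n - m).factorial * ∑ k ∈ range (m + 1), m.choose k * (n - m).choose k := by
            rw [mul_sum]; refine sum_congr rfl fun k _ => by ring
      _ = n.factorial := by
            rw [vander, show m + (n - m) = n by omega, mul_comm, ← mul_assoc]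
            exact Nat.choose_mul_factorial_mul_factorial (by omega)
      _ ≤ _ := le_rfl
  refine (sum_le_sum this).trans ?_
  simp [Nat.factorial_succ]

theorem mem_Codes {n : ℕ} {L1 L2 : List Step} {k m j : ℕ} (h1 : L1 ∈ PP m k)
    (h2 : L2 ∈ PP j k) (hk : k ≤ m) (h : m + j = n) : (L1, L2, k) ∈ Codes n := by
  simp only [Codes, mem_biUnion, mem_image, mem_product, mem_range, Prod.exists]
  refine ⟨m, by omega, k, by omega, L1, L2, ⟨h1, ?_⟩, rfl⟩
  rwa [show n - m = j by omega]

theorem PP_le {m k : ℕ} {L : List Step} (h : L ∈ PP m k) : k ≤ m := by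
  by_contra hc
  have := card_PP m k
  rw [Nat.choose_eq_zero_of_lt (by omega), mul_zero] at this
  have := card_pos.2 ⟨L, h⟩
  omega

theorem swap_Codes {n : ℕ} {L1 L2 : List Step} {k : ℕ} (h : (L1, L2, k) ∈ Codes n) :
    (L2, L1, k) ∈ Codes n := by
  simp only [Codes, mem_biUnion, mem_image, mem_product, mem_range, Prod.exists] at h
  obtain ⟨m, hm, k', hk, A, B, ⟨h1, h2⟩, e⟩ := h
  simp only [Prod.mk.injEq] at e
  obtain ⟨rfl, rfl, rfl⟩ := e
  exact mem_Codes h2 h1 (PP_le h2) (by omega)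

/-! lists of a permutation -/

noncomputable def L1 (P : ℕ → ℕ) (n : ℕ) : ℕ → List Step
  | 0 => []
  | l + 1 => (!(nx P n l), cc P n l, aa P n l, pr P n l) :: L1 P n l

noncomputable def L2 (P : ℕ → ℕ) (n : ℕ) : ℕ → List Step
  | 0 => []
  | j + 1 => (nx P n (n - 1 - j), cc P n (n - 1 - j), dd P n (n - 1 - j), !(pr P n (n - 1 - j - 1)))
      :: L2 P n j

theorem not_toNat (x : Bool) : (!x).toNat + x.toNat = 1 := by cases x <;> rfl

theorem L1_mem {P : ℕ → ℕ} {n : ℕ} (H : Good P n) :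
    ∀ l ≤ n, L1 P n l ∈ PP l (ST P n l).card := by
  intro l
  induction l with
  | zero => intro _; simp [L1, PP, ST_zero]
  | succ l ih =>
    intro hl
    have a1 := split_ST H (l := l) (by omega)
    have a2 := card_ST_succ H (l := l) (by omega)
    refine PP_cons (ih (by omega)) _ _ _ _ ?_ ?_
    · have := not_toNat (nx P n l); omega
    · have := not_toNat (nx P n l); omega

theorem L2_mem {P : ℕ → ℕ} {n : ℕ} (H : Good P n) {b : ℕ} (hb : b < n) (hP : P b + 1 = n) :
    ∀ j ≤ n - 1 - b, ∃ g, g + (pr P n (n - 1 - j)).toNat = (ST P n (n - j)).card ∧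
      L2 P n j ∈ PP j g := by
  intro j
  induction j with
  | zero =>
    intro _
    obtain ⟨N, rfl⟩ : ∃ N, n = N + 1 := ⟨n - 1, by omega⟩
    refine ⟨0, ?_, by simp [L2, PP]⟩
    simp [pr_top, ST_top]
  | succ j ih =>
    intro hj
    obtain ⟨g, hg, hL⟩ := ih (by omega)
    obtain ⟨l, hl⟩ : ∃ l, n - 1 - j = l := ⟨_, rfl⟩
    have hl' : n - j = l + 1 := by omega
    have hl2 : n - (j + 1) = l := by omega
    have hl3 : n - 1 - (j + 1) = l - 1 := by omega
    rw [hl, hl'] at hg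
    rw [hl2, hl3]
    have a1 := split_ST H (l := l) (by omega)
    have a2 := card_ST_succ H (l := l) (by omega)
    have a3 := card_ST_succ H (l := l - 1) (by omega)
    have a4 := split_ST H (l := l - 1) (by omega)
    have a5 := dd_aa H hb hP (l := l) (by omega) (by omega)
    rw [show l - 1 + 1 = l by omega] at a3
    rw [if_neg (by omega)] at a5
    refine ⟨(ST P n l).card - (pr P n (l - 1)).toNat, ?_, ?_⟩
    · omega
    · rw [L2, hl]
      refine PP_cons hL _ _ _ _ ?_ ?_
      · omega
      · have := not_toNat (pr P n (l - 1)); omega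

noncomputable def code (P : ℕ → ℕ) (n b : ℕ) : Code :=
  (L1 P n b, L2 P n (n - 1 - b), (ST P n b).card)

theorem code_mem {P : ℕ → ℕ} {n : ℕ} (H : Good P (n + 1)) {b : ℕ} (hb : b < n + 1)
    (hP : P b = n) : code P (n + 1) b ∈ Codes n := by
  have h1 := L1_mem H b (by omega)
  obtain ⟨g, hg, h2⟩ := L2_mem H hb (by omega) (n + 1 - 1 - b) le_rfl
  have a2 := card_ST_succ H (l := b) (by omega)
  rw [last_nx H (by omega)] at a2
  have e : n + 1 - 1 - (n + 1 - 1 - b) = b := by omega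
  have e2 : n + 1 - (n + 1 - 1 - b) = b + 1 := by omega
  rw [e, e2] at hg
  simp at a2
  have : g = (ST P (n + 1) b).card := by omega
  subst this
  exact mem_Codes h1 h2 (PP_le h1) (by omega)

theorem L1_inj {P R : ℕ → ℕ} {n : ℕ} : ∀ m, L1 P n m = L1 R n m → ∀ l < m,
    nx P n l = nx R n l ∧ cc P n l = cc R n l ∧ pr P n l = pr R n l := by
  intro m
  induction m with
  | zero => intro _ l h; omega
  | succ m ih =>
    intro h l hl
    simp only [L1, List.cons.injEq, Prod.mk.injEq] at h
    rcases Nat.lt_succ_iff_lt_or_eq.1 hl with hl | rfl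
    · exact ih h.2 l hl
    · exact ⟨by simpa using h.1.1, h.1.2.1, h.1.2.2.2⟩

theorem L2_inj {P R : ℕ → ℕ} {n : ℕ} : ∀ m, L2 P n m = L2 R n m → ∀ j < m,
    nx P n (n - 1 - j) = nx R n (n - 1 - j) ∧ cc P n (n - 1 - j) = cc R n (n - 1 - j) ∧
    pr P n (n - 1 - j - 1) = pr R n (n - 1 - j - 1) := by
  intro m
  induction m with
  | zero => intro _ l h; omega
  | succ m ih =>
    intro h l hl
    simp only [L2, List.cons.injEq, Prod.mk.injEq] at h
    rcases Nat.lt_succ_iff_lt_or_eq.1 hl with hl | rfl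
    · exact ih h.2 l hl
    · exact ⟨h.1.1, h.1.2.1, by simpa using h.1.2.2.2⟩

theorem L1_length {P : ℕ → ℕ} {n : ℕ} : ∀ m, (L1 P n m).length = m := by
  intro m
  induction m with
  | zero => rfl
  | succ m ih => simp [L1, ih]

theorem code_inj {P R : ℕ → ℕ} {n : ℕ} (H : Good P (n + 1)) (K : Good R (n + 1)) {b c : ℕ}
    (hb : b < n + 1) (hP : P b = n) (hR : R c = n) (h : code P (n + 1) b = code R (n + 1) c)
    (hc : c < n + 1) : ∀ x < n + 1, P x = R x := by
  simp only [code, Prod.mk.injEq] at h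
  obtain ⟨h1, h2, h3⟩ := h
  have : b = c := by
    have := congrArg List.length h1
    rwa [L1_length, L1_length] at this
  subst this
  have i1 := L1_inj _ h1
  have i2 := L2_inj _ h2
  have e1 := last_nx H (b := b) (by omega)
  have e2 := last_nx K (b := b) (by omega)
  have s1 := split_ST H (l := b) (by omega)
  have s2 := split_ST K (l := b) (by omega)
  rw [last_aa H (by omega), e1] at s1
  rw [last_aa K (by omega), e2] at s2
  simp at s1 s2
  apply inj_main H K
  · intro l hl
    rcases lt_trichotomy l b with h | rfl | h
    · exact (i1 l h).1
    · rw [e1, e2]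
    · have := (i2 (n - l) (by omega)).1
      rwa [show n + 1 - 1 - (n - l) = l by omega] at this
  · intro l hl
    rcases lt_or_ge l b with h | h
    · exact (i1 l h).2.2
    · by_cases hn : l = n
      · subst hn; rw [pr_top, pr_top]
      · have := (i2 (n - (l + 1)) (by omega)).2.2
        rwa [show n + 1 - 1 - (n - (l + 1)) - 1 = l by omega] at this
  · intro l hl
    rcases lt_trichotomy l b with h | rfl | h
    · exact (i1 l h).2.1
    · omega
    · have := (i2 (n - l) (by omega)).2.1
      rwa [show n + 1 - 1 - (n - l) = l by omega] at this

/-! statistics from codes -/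

def wC (L : List Step) : ℕ := (L.map fun s => s.2.1).sum
def wA (L : List Step) : ℕ := (L.map fun s => s.2.2.1).sum
def wR (L : List Step) : ℕ := (L.map fun s => (!s.1).toNat).sum

theorem L1_w (P : ℕ → ℕ) (n : ℕ) (f : Step → ℕ) : ∀ m, ((L1 P n m).map f).sum =
    ∑ l ∈ range m, f (!(nx P n l), cc P n l, aa P n l, pr P n l) := by
  intro m
  induction m with
  | zero => rfl
  | succ m ih => rw [L1, List.map_cons, List.sum_cons, ih, sum_range_succ, add_comm]

theorem L2_w (P : ℕ → ℕ) (n : ℕ) (f : Step → ℕ) : ∀ m, ((L2 P n m).map f).sum =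
    ∑ j ∈ range m, f (nx P n (n - 1 - j), cc P n (n - 1 - j), dd P n (n - 1 - j),
      !(pr P n (n - 1 - j - 1))) := by
  intro m
  induction m with
  | zero => rfl
  | succ m ih => rw [L2, List.map_cons, List.sum_cons, ih, sum_range_succ, add_comm]

theorem sum_split (f : ℕ → ℕ) {n b : ℕ} (hb : b < n + 1) :
    ∑ l ∈ range (n + 1), f l =
      ∑ l ∈ range b, f l + f b + ∑ j ∈ range (n + 1 - 1 - b), f (n + 1 - 1 - j) := by
  rw [← sum_range_add_sum_Ico f (show b + 1 ≤ n + 1 by omega), sum_range_succ]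
  congr 1
  rw [sum_Ico_eq_sum_range, ← sum_range_reflect]
  refine sum_congr (by congr 1; omega) fun j hj => ?_
  rw [mem_range] at hj
  congr 1; omega

theorem stats_code {P : ℕ → ℕ} {n : ℕ} (H : Good P (n + 1)) {b : ℕ} (hb : b < n + 1)
    (hP : P b = n) :
    ∑ l ∈ range (n + 1), cc P (n + 1) l =
      wC (L1 P (n + 1) b) + wC (L2 P (n + 1) (n + 1 - 1 - b)) + (ST P (n + 1) b).card ∧
    ∑ l ∈ range (n + 1), aa P (n + 1) l =
      wA (L1 P (n + 1) b) + wA (L2 P (n + 1) (n + 1 - 1 - b)) + wR (L2 P (n + 1) (n + 1 - 1 - b)) ∧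
    ∑ l ∈ range (n + 1), dd P (n + 1) l =
      wA (L1 P (n + 1) b) + wA (L2 P (n + 1) (n + 1 - 1 - b)) + wR (L1 P (n + 1) b) := by
  simp only [wC, wA, wR, L1_w, L2_w]
  have s1 := split_ST H (l := b) (by omega)
  rw [last_aa H (by omega), last_nx H (by omega)] at s1
  simp only [Bool.toNat_false] at s1
  refine ⟨?_, ?_, ?_⟩
  · rw [sum_split _ hb]; omega
  · rw [sum_split _ hb, last_aa H (by omega), add_zero, add_assoc, ← sum_add_distrib]
    congr 1
    refine sum_congr rfl fun j hj => ?_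
    rw [mem_range] at hj
    have := dd_aa H hb (by omega) (l := n + 1 - 1 - j) (by omega) (by omega)
    rw [if_neg (by omega)] at this
    have := not_toNat (nx P (n + 1) (n + 1 - 1 - j)); omega
  · rw [sum_split _ hb, last_dd H (by omega), add_zero, add_right_comm, ← sum_add_distrib]
    congr 1
    refine sum_congr rfl fun j hj => ?_
    rw [mem_range] at hj
    have := dd_aa H hb (by omega) (l := j) (by omega) (by omega)
    rw [if_pos (by omega)] at this
    have := not_toNat (nx P (n + 1) j)
    simp only [Bool.not_not]; omega

end Paper

namespace Paper

open Finset

/-- Position of a letter, as a function on naturals. -/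
def posN {n : ℕ} (σ : Equiv.Perm (Fin n)) (x : ℕ) : ℕ :=
  if h : x < n then (σ.symm ⟨x, h⟩ : ℕ) else 0

theorem posN_val {n : ℕ} (σ : Equiv.Perm (Fin n)) (x : Fin n) : posN σ x = σ.symm x := by
  simp [posN]

theorem posN_good {n : ℕ} (σ : Equiv.Perm (Fin n)) : Good (posN σ) n where
  inj := by
    intro x hx y hy h
    simp only [posN, hx, hy, dif_pos] at h
    have := σ.symm.injective (Fin.ext h)
    simpa using this
  lt := by
    intro x hx
    simp only [posN, hx, dif_pos]
    exact (σ.symm ⟨x, hx⟩).isLt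
  surj := by
    intro i hi
    exact ⟨σ ⟨i, hi⟩, (σ ⟨i, hi⟩).isLt, by rw [posN_val]; simp⟩

theorem valAt_eq {n : ℕ} (σ : Equiv.Perm (Fin n)) (j : ℕ) (hj : j < n) :
    valAt (⇑σ) (j + 1) = (σ ⟨j, hj⟩ : ℕ) + 1 := by
  unfold valAt
  rw [dif_pos (by omega)]
  simp

theorem card_prod {n : ℕ} (p : Fin n × Fin n → Prop) [DecidablePred p] (f : ℕ → ℕ)
    (h : ∀ l : Fin n, (univ.filter fun j => p (l, j)).card = f l) :
    (univ.filter p).card = ∑ l ∈ range n, f l := by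
  rw [← Fin.sum_univ_eq_sum_range, card_filter, Fintype.sum_prod_type]
  refine sum_congr rfl fun l _ => ?_
  rw [← h l, card_filter]

theorem stat31_2_eq {n : ℕ} (σ : Equiv.Perm (Fin n)) :
    stat31_2 σ = ∑ l ∈ range n, cc (posN σ) n l := by
  classical
  unfold stat31_2
  refine card_prod _ _ fun l => ?_
  unfold cc
  refine card_bij (fun j _ => (σ j : ℕ)) ?_ ?_ ?_
  · intro j hj
    replace hj := (mem_filter.1 hj).2
    simp only [pv] at hj
    obtain ⟨h1, h2, h3, h4⟩ := hj
    have e : (j : ℕ) + 1 - 1 = ((j : ℕ) - 1) + 1 := by omega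
    rw [valAt_eq σ j j.isLt] at h3
    rw [e, valAt_eq σ (j - 1) (by omega)] at h4
    simp only [mem_filter, mem_range, posN_val, Equiv.symm_apply_apply]
    refine ⟨(σ j).isLt, by simpa using h3, by omega, σ ⟨j - 1, by omega⟩, Fin.isLt _, by omega, ?_⟩
    rw [posN_val, Equiv.symm_apply_apply]
    simp only; omega
  · intro i _ j _ e
    exact σ.injective (Fin.ext e)
  · intro y hy
    simp only [mem_filter, mem_range] at hy
    obtain ⟨h1, h2, h3, x, h4, h5, h6⟩ := hy
    refine ⟨σ.symm ⟨y, h1⟩, ?_, by simp⟩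
    have ey := posN_val σ ⟨y, h1⟩
    have ex := posN_val σ ⟨x, h4⟩
    have el := posN_val σ l
    simp only at ey ex el
    have hx : (⟨(σ.symm ⟨y, h1⟩ : ℕ) - 1, by omega⟩ : Fin n) = σ.symm ⟨x, h4⟩ := by
      apply Fin.ext; simp only; omega
    refine mem_filter.2 ⟨mem_univ _, ?_⟩
    simp only [pv]
    rw [show ((σ.symm ⟨y, h1⟩ : Fin n) : ℕ) + 1 - 1 = ((σ.symm ⟨y, h1⟩ : ℕ) - 1) + 1 by omega,
      valAt_eq _ _ (by omega), valAt_eq _ _ (by omega), hx]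
    simp only [Fin.eta, Equiv.apply_symm_apply]
    omega

theorem stat2_31_eq {n : ℕ} (σ : Equiv.Perm (Fin n)) :
    stat2_31 σ = ∑ l ∈ range n, aa (posN σ) n l := by
  classical
  unfold stat2_31
  refine card_prod _ _ fun l => ?_
  symm
  unfold aa
  have hlast : ∀ y ∈ (range n).filter (fun y => y < (l : ℕ) ∧ posN σ l < posN σ y ∧
      ∃ x < n, (l : ℕ) < x ∧ posN σ x + 1 = posN σ y), posN σ y - 1 < n := by
    intro y hy
    simp only [mem_filter, mem_range] at hy
    have := (posN_good σ).lt y hy.1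
    omega
  refine card_bij (fun y hy => ⟨posN σ y - 1, hlast y hy⟩) ?_ ?_ ?_
  · intro y hy
    simp only [mem_filter, mem_range] at hy
    obtain ⟨h1, h2, h3, x, h4, h5, h6⟩ := hy
    have ey := posN_val σ ⟨y, h1⟩
    have ex := posN_val σ ⟨x, h4⟩
    have el := posN_val σ l
    simp only at ey ex el
    have hyn := (posN_good σ).lt y h1
    have hne : posN σ x ≠ posN σ l := fun h => by
      have := (posN_good σ).inj x h4 l l.isLt h; omega
    have hx : (⟨posN σ y - 1, by omega⟩ : Fin n) = σ.symm ⟨x, h4⟩ := by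
      apply Fin.ext; simp only; omega
    have hy : (⟨posN σ y - 1 + 1, by omega⟩ : Fin n) = σ.symm ⟨y, h1⟩ := by
      apply Fin.ext; simp only; omega
    refine mem_filter.2 ⟨mem_univ _, ?_⟩
    simp only [pv]
    rw [valAt_eq _ _ (by omega), valAt_eq _ _ (by omega), hx, hy]
    simp only [Equiv.apply_symm_apply]
    omega
  · intro y hy z hz e
    simp only [mem_filter, mem_range] at hy hz
    simp only [Fin.mk.injEq] at e
    exact (posN_good σ).inj y hy.1 z hz.1 (by omega)
  · intro j hj
    replace hj := (mem_filter.1 hj).2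
    simp only [pv] at hj
    obtain ⟨h1, h2, h3, h4⟩ := hj
    rw [valAt_eq σ j j.isLt] at h4
    rw [valAt_eq σ (j + 1) (by omega)] at h3
    refine ⟨σ ⟨j + 1, h2⟩, ?_, ?_⟩
    · simp only [mem_filter, mem_range, posN_val, Equiv.symm_apply_apply]
      refine ⟨Fin.isLt _, by omega, by omega, σ j, Fin.isLt _, by simpa using h4, ?_⟩
      rw [posN_val, Equiv.symm_apply_apply]
    · apply Fin.ext
      simp [posN_val]

theorem stat2_13_eq {n : ℕ} (σ : Equiv.Perm (Fin n)) :
    stat2_13 σ = ∑ l ∈ range n, dd (posN σ) n l := by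
  classical
  unfold stat2_13
  refine card_prod _ _ fun l => ?_
  unfold dd
  refine card_bij (fun j _ => (σ j : ℕ)) ?_ ?_ ?_
  · intro j hj
    replace hj := (mem_filter.1 hj).2
    simp only [pv] at hj
    obtain ⟨h1, h2, h3, h4⟩ := hj
    rw [valAt_eq σ j j.isLt] at h3
    rw [valAt_eq σ (j + 1) (by omega)] at h4
    simp only [mem_filter, mem_range, posN_val, Equiv.symm_apply_apply]
    refine ⟨(σ j).isLt, by simpa using h3, by omega, σ ⟨j + 1, by omega⟩, Fin.isLt _, by omega, ?_⟩
    rw [posN_val, Equiv.symm_apply_apply]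
  · intro i _ j _ e
    exact σ.injective (Fin.ext e)
  · intro y hy
    simp only [mem_filter, mem_range] at hy
    obtain ⟨h1, h2, h3, x, h4, h5, h6⟩ := hy
    refine ⟨σ.symm ⟨y, h1⟩, ?_, by simp⟩
    have ey := posN_val σ ⟨y, h1⟩
    have ex := posN_val σ ⟨x, h4⟩
    have el := posN_val σ l
    simp only at ey ex el
    have hxn := (posN_good σ).lt x h4
    have hx : (⟨(σ.symm ⟨y, h1⟩ : ℕ) + 1, by omega⟩ : Fin n) = σ.symm ⟨x, h4⟩ := by
      apply Fin.ext; simp only; omega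
    refine mem_filter.2 ⟨mem_univ _, ?_⟩
    simp only [pv]
    rw [valAt_eq _ _ (by omega), valAt_eq _ _ (by omega), hx]
    simp only [Fin.eta, Equiv.apply_symm_apply]
    omega

noncomputable def pcode {n : ℕ} (σ : Equiv.Perm (Fin (n + 1))) : Code :=
  code (posN σ) (n + 1) (σ (Fin.last n))

theorem posN_last {n : ℕ} (σ : Equiv.Perm (Fin (n + 1))) :
    posN σ (σ (Fin.last n)) = n := by
  rw [posN_val]; simp

theorem pcode_inj {n : ℕ} : Function.Injective (pcode (n := n)) := by
  intro σ τ h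
  have := code_inj (posN_good σ) (posN_good τ) (Fin.isLt _) (posN_last σ) (posN_last τ) h
    (Fin.isLt _)
  have e : σ.symm = τ.symm := by
    ext x
    have := this x x.isLt
    rwa [posN_val, posN_val] at this
  rw [← Equiv.symm_symm σ, e, Equiv.symm_symm]

theorem pcode_surj {n : ℕ} (c : Code) (hc : c ∈ Codes n) : ∃ σ : Equiv.Perm (Fin (n + 1)), pcode σ = c := by
  classical
  have : (univ.image (pcode (n := n))) = Codes n := by
    apply eq_of_subset_of_card_le
    · intro c
      simp only [mem_image, mem_univ, true_and]
      rintro ⟨σ, rfl⟩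
      exact code_mem (posN_good σ) (Fin.isLt _) (posN_last σ)
    · rw [card_image_of_injective _ pcode_inj, card_univ, Fintype.card_perm, Fintype.card_fin]
      exact card_Codes n
  rw [← this] at hc
  simpa using hc

/-- there is an involution φ̂ on Sₙ preserving \underline{31}2 and
exchanging 2\underline{31} with 2\underline{13}. -/
theorem exists_involution_phi (n : ℕ) :
    ∃ φ : Equiv.Perm (Fin n) → Equiv.Perm (Fin n),
      Function.Involutive φ ∧
      ∀ σ : Equiv.Perm (Fin n),
        stat31_2 σ = stat31_2 (φ σ) ∧ stat2_31 σ = stat2_13 (φ σ) := by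
  rcases n with _ | n
  · exact ⟨id, fun _ => rfl, fun σ => by simp [stat2_31_eq, stat2_13_eq]⟩
  have hex : ∀ σ : Equiv.Perm (Fin (n + 1)), ∃ τ : Equiv.Perm (Fin (n + 1)),
      pcode τ = ((pcode σ).2.1, (pcode σ).1, (pcode σ).2.2) := fun σ =>
    pcode_surj _ (swap_Codes (code_mem (posN_good σ) (Fin.isLt _) (posN_last σ)))
  choose φ hφ using hex
  refine ⟨φ, fun σ => pcode_inj ?_, fun σ => ?_⟩
  · rw [hφ, hφ]
  · have h := hφ σ
    obtain ⟨a1, a2, a3⟩ := stats_code (posN_good σ) (Fin.isLt _) (posN_last σ)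
    obtain ⟨b1, b2, b3⟩ := stats_code (posN_good (φ σ)) (Fin.isLt _) (posN_last (φ σ))
    simp only [pcode, code, Prod.mk.injEq] at h
    obtain ⟨h1, h2, h3⟩ := h
    rw [stat31_2_eq, stat31_2_eq, stat2_31_eq, stat2_13_eq, a1, a2, b1, b3, h1, h2, h3]
    omega

end Paper
end

section
/- The triple of vincular statistics (\underline{31}2, 2\underline{13}, 2\underline{31}) is equidistributed with (\underline{31}2, 2\underline{31}, 2\underline{13}) on S_n; i.e., the generating polynomial P_n restricted by setting p = 1 is symmetric in its last two variables: ∑_{σ∈S_n} q^{31̲2(σ)} r^{213̲(σ)} s^{231̲(σ)} = ∑_{σ∈S_n} q^{31̲2(σ)} r^{231̲(σ)} s^{213̲(σ)}. -/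
namespace Paper


/-- Updated flag: does the word still end with a placeholder? -/
def nf (e : Bool) (R : ℕ) (b : Bool) : Bool := if e = true ∧ R = 0 then b else e

section algebra
variable {R : Type*} [CommSemiring R]

def phi (q r s : R) : ℕ → ℕ → Bool → R
  | 0, m, _ => if m = 0 then 1 else 0
  | j + 1, m, e => ∑ i ∈ Finset.range m, ∑ a : Bool, ∑ b : Bool,
      q ^ i * r ^ (m - 1 - i) * s ^ (m - 1 - i + b.toNat - (nf e (m - 1 - i) b).toNat) *
        phi q r s j (m - 1 + a.toNat + b.toNat) (nf e (m - 1 - i) b)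

/-- `[m]`, the complete homogeneous sum. -/
def hsum (q t : R) (m : ℕ) : R := ∑ i ∈ Finset.range m, q ^ i * t ^ (m - 1 - i)

/-- `yy` is the phase-two weight. -/
def yy (q t s : R) : ℕ → ℕ → R
  | 0, m => if m = 0 then 1 else 0
  | j + 1, m => hsum q t m * (yy q t s j (m - 1) + yy q t s j m
      + s * (yy q t s j m + yy q t s j (m + 1)))

theorem phi_false (q r s : R) (j m : ℕ) : phi q r s j m false = yy q (r * s) s j m := by
  induction j generalizing m with
  | zero => simp [phi, yy]
  | succ j ih =>
    rw [phi, yy, hsum, Finset.sum_mul]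
    refine Finset.sum_congr rfl fun i hi => ?_
    have hm : i < m := Finset.mem_range.1 hi
    have h1 : m - 1 + 1 = m := by omega
    simp [nf, ih, h1, mul_pow, pow_succ]
    ring

def xx (q t s : R) (j g : ℕ) : R := yy q t s j g + yy q t s j (g + 1)

theorem hsum_zero (q t : R) : hsum q t 0 = 0 := by simp [hsum]

theorem phi_true (q r s : R) (j g : ℕ) : phi q r s (j + 1) (g + 1) true =
    hsum q (r * s) (g + 1) * (phi q r s j (g + 1) true + phi q r s j (g + 2) true)
    + r * hsum q (r * s) g * (phi q r s j g true + phi q r s j (g + 1) true)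
    + q ^ g * xx q (r * s) s j g := by
  rw [phi, Finset.sum_range_succ, hsum, Finset.sum_range_succ, hsum, xx]
  have : ∀ i ∈ Finset.range g, (∑ a : Bool, ∑ b : Bool,
      q ^ i * r ^ (g + 1 - 1 - i) * s ^ (g + 1 - 1 - i + b.toNat - (nf true (g + 1 - 1 - i) b).toNat) *
        phi q r s j (g + 1 - 1 + a.toNat + b.toNat) (nf true (g + 1 - 1 - i) b)) =
      q ^ i * (r * s) ^ (g + 1 - 1 - i) * (phi q r s j (g + 1) true + phi q r s j (g + 2) true)
      + r * (q ^ i * (r * s) ^ (g - 1 - i)) * (phi q r s j g true + phi q r s j (g + 1) true) := by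
    intro i hi
    have hm : i < g := Finset.mem_range.1 hi
    obtain ⟨d, rfl⟩ : ∃ d, g = i + 1 + d := ⟨g - i - 1, by omega⟩
    have h1 : i + 1 + d + 1 - 1 - i = d + 1 := by omega
    have h2 : i + 1 + d - 1 - i = d := by omega
    have h3 : i + 1 + d + 1 - 1 = i + 1 + d := by omega
    rw [h1, h2, h3]
    simp [nf, mul_pow, pow_succ]
    ring
  rw [Finset.sum_congr rfl this, Finset.sum_add_distrib, ← Finset.sum_mul, ← Finset.sum_mul,
    ← Finset.mul_sum]
  simp [nf, phi_false]
  ring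

theorem xx_zero (q t s : R) (g : ℕ) : xx q t s 0 g = if g = 0 then 1 else 0 := by
  simp [xx, yy]

theorem yy_succ (q t s : R) (j g : ℕ) : yy q t s (j + 1) (g + 1) =
    hsum q t (g + 1) * (xx q t s j g + s * xx q t s j (g + 1)) := by
  simp [yy, xx]

theorem xx_succ_zero (q t s : R) (j : ℕ) : xx q t s (j + 1) 0 =
    hsum q t 1 * xx q t s j 0 + s * hsum q t 1 * xx q t s j 1 := by
  rw [xx, yy_succ, yy, hsum_zero]; simp; ring

theorem xx_succ (q t s : R) (j g : ℕ) : xx q t s (j + 1) (g + 1) =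
    hsum q t (g + 2) * xx q t s j (g + 1) + s * hsum q t (g + 1) * xx q t s j (g + 1)
    + hsum q t (g + 1) * xx q t s j g + s * hsum q t (g + 2) * xx q t s j (g + 2) := by
  rw [xx, yy_succ, yy_succ]; ring

theorem yy_supp (q t s : R) (j m : ℕ) (h : j < m) : yy q t s j m = 0 := by
  induction j generalizing m with
  | zero => simp [yy]; omega
  | succ j ih =>
    rw [yy, ih _ (by omega), ih _ (by omega), ih _ (by omega)]; simp

theorem xx_supp (q t s : R) (j g : ℕ) (h : j < g) : xx q t s j g = 0 := by
  rw [xx, yy_supp _ _ _ _ _ h, yy_supp _ _ _ _ _ (by omega), add_zero]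

/-- Summation by parts, with exact boundary terms. -/
theorem parts (q r s : R) (i j N : ℕ) :
    (∑ g ∈ Finset.range (N + 1), xx q (r * s) r i g * phi q r s (j + 1) (g + 1) true)
      + r * hsum q (r * s) (N + 1) * xx q (r * s) r i (N + 1) * phi q r s j (N + 1) true =
    (∑ g ∈ Finset.range (N + 1), xx q (r * s) r (i + 1) g * phi q r s j (g + 1) true)
      + hsum q (r * s) (N + 1) * xx q (r * s) r i N * phi q r s j (N + 2) true
      + ∑ g ∈ Finset.range (N + 1), q ^ g * (xx q (r * s) r i g * xx q (r * s) s j g) := by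
  induction N with
  | zero =>
    simp [xx_succ_zero, phi_true, hsum_zero]; ring
  | succ N ih =>
    rw [Finset.sum_range_succ, Finset.sum_range_succ _ (N + 1), Finset.sum_range_succ _ (N + 1),
      phi_true, xx_succ]
    have := congrArg (· + (xx q (r * s) r i (N + 1) * (hsum q (r * s) (N + 2) * (phi q r s j (N + 2) true + phi q r s j (N + 3) true) + r * hsum q (r * s) (N+1) * phi q r s j (N + 2) true + q ^ (N+1) * xx q (r * s) s j (N+1)) + r * hsum q (r * s) (N + 2) * xx q (r * s) r i (N + 2) * phi q r s j (N + 2) true)) ih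
    ring_nf at this ⊢
    exact this

theorem phi_eq (q r s : R) (i j N : ℕ) (hN : i + j ≤ N) :
    (∑ g ∈ Finset.range (N + 1), xx q (r * s) r i g * phi q r s j (g + 1) true) =
    ∑ l ∈ Finset.range j, ∑ g ∈ Finset.range (N + 1),
      q ^ g * (xx q (r * s) r (i + l) g * xx q (r * s) s (j - 1 - l) g) := by
  induction j generalizing i with
  | zero => simp [phi]
  | succ j ih =>
    have h := parts q r s i j N
    rw [xx_supp _ _ _ i (N + 1) (by omega), xx_supp _ _ _ i N (by omega)] at h
    simp only [mul_zero, zero_mul, add_zero] at h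
    rw [h, ih (i + 1) (by omega), Finset.sum_range_succ' _ j]
    refine congrArg₂ (· + ·) (Finset.sum_congr rfl fun l hl => ?_) (by simp)
    have h1 : j + 1 - 1 - (l + 1) = j - 1 - l := by omega
    have h2 : i + (l + 1) = i + 1 + l := by omega
    rw [h1, h2]

theorem phi_symm (q r s : R) (n : ℕ) : phi q r s n 1 true = phi q s r n 1 true := by
  have key : ∀ r s : R, phi q r s n 1 true = ∑ l ∈ Finset.range n, ∑ g ∈ Finset.range (n + 1),
      q ^ g * (xx q (r * s) r l g * xx q (r * s) s (n - 1 - l) g) := by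
    intro r s
    have := phi_eq q r s 0 n n (by omega)
    simpa [xx_zero] using this
  rw [key, key, ← Finset.sum_range_reflect]
  refine Finset.sum_congr rfl fun l hl => Finset.sum_congr rfl fun g hg => ?_
  have hl := Finset.mem_range.1 hl
  have : n - 1 - (n - 1 - l) = l := by omega
  rw [this, mul_comm s r]; ring
end algebra

section words

def asc (c : ℕ) : List ℕ → ℕ
  | [] => 0
  | [_] => 0
  | a :: b :: l => (if a < c ∧ c < b then 1 else 0) + asc c (b :: l)

def des (c : ℕ) : List ℕ → ℕ
  | [] => 0
  | [_] => 0
  | a :: b :: l => (if b < c ∧ c < a then 1 else 0) + des c (b :: l)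

def S213 : List ℕ → ℕ
  | [] => 0
  | c :: l => asc c l + S213 l

def S231 : List ℕ → ℕ
  | [] => 0
  | c :: l => des c l + S231 l

/-- optional placeholder -/
def opt (B : ℕ) (a : Bool) : List ℕ := if a then [B] else []

/-- the replacement of a placeholder -/
def blk (B k : ℕ) (a b : Bool) : List ℕ := opt B a ++ k :: opt B b

def endsB (B : ℕ) (w : List ℕ) : Bool := decide (w.getLast? = some B)

def NoBB (B : ℕ) (w : List ℕ) : Prop := w.IsChain (fun a b => ¬ (a = B ∧ b = B))

theorem asc_top (B : ℕ) (l : List ℕ) (h : ∀ a ∈ l, a ≤ B) : asc B l = 0 := by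
  induction l with
  | nil => rfl
  | cons a l ih =>
    cases l with
    | nil => rfl
    | cons b l =>
      have hb := h b (by simp)
      rw [asc, ih (fun x hx => h x (by simp [hx])), if_neg (by omega)]

theorem des_top (B : ℕ) (l : List ℕ) (h : ∀ a ∈ l, a ≤ B) : des B l = 0 := by
  induction l with
  | nil => rfl
  | cons a l ih =>
    cases l with
    | nil => rfl
    | cons b l =>
      have hb := h a (by simp)
      rw [des, ih (fun x hx => h x (by simp [hx])), if_neg (by omega)]

theorem asc_blk (B k c : ℕ) (a b : Bool) (hc : c < k) (hk : k < B) (u v : List ℕ) :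
    asc c (u ++ (blk B k a b ++ v)) = asc c (u ++ B :: v) := by
  induction u with
  | nil =>
    cases v with
    | nil => cases a <;> cases b <;> simp [blk, opt, asc] <;> omega
    | cons x v => cases a <;> cases b <;> simp [blk, opt, asc] <;> grind
  | cons x u ih =>
    cases u with
    | nil => 
      simp only [List.nil_append, List.cons_append] at ih ⊢
      cases a <;> cases b <;> simp [blk, opt, asc] at ih ⊢ <;> grind
    | cons y u =>
      simp only [List.cons_append, asc] at ih ⊢
      rw [ih]

theorem des_blk (B k c : ℕ) (a b : Bool) (hc : c < k) (hk : k < B) (u v : List ℕ) :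
    des c (u ++ (blk B k a b ++ v)) = des c (u ++ B :: v) := by
  induction u with
  | nil =>
    cases v with
    | nil => cases a <;> cases b <;> simp [blk, opt, des] <;> omega
    | cons x v => cases a <;> cases b <;> simp [blk, opt, des] <;> grind
  | cons x u ih =>
    cases u with
    | nil => 
      simp only [List.nil_append, List.cons_append] at ih ⊢
      cases a <;> cases b <;> simp [blk, opt, des] at ih ⊢ <;> grind
    | cons y u =>
      simp only [List.cons_append, des] at ih ⊢
      rw [ih]

/-- counting ascents over the new letter -/
theorem asc_count (B k : ℕ) (hk : k < B) (l : List ℕ) (h : ∀ a ∈ l, a < k ∨ a = B)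
    (hc : NoBB B l) : asc k l + (if l.head? = some B then 1 else 0) = l.count B := by
  induction l with
  | nil => rfl
  | cons a l ih =>
    cases l with
    | nil => simp [asc, List.count_cons]
    | cons b l =>
      have hc' : NoBB B (b :: l) := (List.isChain_cons_cons.1 hc).2
      have hab := (List.isChain_cons_cons.1 hc).1
      have ih := ih (fun x hx => h x (by simp [hx])) hc'
      have ha := h a (by simp)
      have hb := h b (by simp)
      rw [List.count_cons, ← ih, asc]
      simp only [List.head?_cons, Option.some.injEq, beq_iff_eq]
      grind

theorem des_count (B k : ℕ) (hk : k < B) (l : List ℕ) (h : ∀ a ∈ l, a < k ∨ a = B)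
    (hc : NoBB B l) : des k l + (endsB B l).toNat = l.count B := by
  induction l with
  | nil => rfl
  | cons a l ih =>
    cases l with
    | nil => 
      by_cases h : a = B <;> simp [des, endsB, h]
    | cons b l =>
      have hc' : NoBB B (b :: l) := (List.isChain_cons_cons.1 hc).2
      have hab := (List.isChain_cons_cons.1 hc).1
      have ih := ih (fun x hx => h x (by simp [hx])) hc'
      have ha := h a (by simp)
      have hb := h b (by simp)
      have he : endsB B (a :: b :: l) = endsB B (b :: l) := by simp [endsB, List.getLast?_cons_cons]
      rw [List.count_cons, ← ih, des, he]
      simp only [beq_iff_eq]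
      grind

theorem S213_blk (B k : ℕ) (a b : Bool) (hk : k < B) (u v : List ℕ)
    (hu : ∀ a ∈ u, a < k ∨ a = B) (hv : ∀ a ∈ v, a < k ∨ a = B)
    (hc : NoBB B (B :: v)) :
    S213 (u ++ (blk B k a b ++ v)) = S213 (u ++ B :: v) + v.count B := by
  have hle : ∀ l : List ℕ, (∀ a ∈ l, a < k ∨ a = B) → ∀ a ∈ l, a ≤ B := by
    intro l hl a ha
    have := hl a ha
    omega
  induction u with
  | nil =>
    have hcv : NoBB B v := List.IsChain.tail hc
    have h0 := asc_count B k hk (B :: v) (by simpa using hv) hc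
    have h1 := asc_top B v (hle v hv)
    have h2 : asc B (k :: v) = 0 := asc_top B _ (by simpa using ⟨hk.le, hle v hv⟩)
    have h3 : asc B (k :: B :: v) = 0 := asc_top B _ (by simpa using ⟨hk.le, hle v hv⟩)
    have h4 : asc k (B :: v) = asc k v := by
      cases v with
      | nil => rfl
      | cons x v => simp [asc]; omega
    simp only [List.head?_cons, if_true, List.count_cons_self] at h0
    cases a <;> cases b <;> simp [blk, opt, S213] <;> omega
  | cons x u ih =>
    have ih := ih (fun x hx => hu x (by simp [hx]))
    simp only [List.cons_append, S213]
    rw [ih]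
    rcases hu x (by simp) with hx | rfl
    · rw [asc_blk _ _ _ _ _ hx hk]; omega
    · have hu' := hle u (fun x hx => hu x (by simp [hx]))
      have hv' := hle v hv
      rw [asc_top, asc_top]
      · omega
      · intro y hy
        simp at hy
        rcases hy with hy | rfl | hy
        · exact hu' y hy
        · exact le_rfl
        · exact hv' y hy
      · intro y hy
        have : y = k ∨ y = x ∨ y ∈ u ∨ y ∈ v := by
          cases a <;> cases b <;> simp [blk, opt] at hy <;> tauto
        rcases this with rfl | rfl | hy | hy
        · exact hk.le
        · exact le_rfl
        · exact hu' y hy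
        · exact hv' y hy

theorem S231_blk (B k : ℕ) (a b : Bool) (hk : k < B) (u v : List ℕ)
    (hu : ∀ a ∈ u, a < k ∨ a = B) (hv : ∀ a ∈ v, a < k ∨ a = B)
    (hc : NoBB B (B :: v)) :
    S231 (u ++ (blk B k a b ++ v)) = S231 (u ++ B :: v) + 
      (v.count B + b.toNat - (endsB B (opt B b ++ v)).toNat) := by
  have hle : ∀ l : List ℕ, (∀ a ∈ l, a < k ∨ a = B) → ∀ a ∈ l, a ≤ B := by
    intro l hl a ha
    have := hl a ha
    omega
  induction u with
  | nil =>
    have hcv : NoBB B v := List.IsChain.tail hc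
    have h0 := des_count B k hk (B :: v) (by simpa using hv) hc
    have h0' := des_count B k hk v (by simpa using hv) hcv
    have h1 := des_top B v (hle v hv)
    have h2 : des B (k :: v) = 0 := des_top B _ (by simpa using ⟨hk.le, hle v hv⟩)
    have h3 : des B (k :: B :: v) = 0 := des_top B _ (by simpa using ⟨hk.le, hle v hv⟩)
    simp only [List.count_cons_self] at h0
    cases a <;> cases b <;> simp [blk, opt, S231] <;> omega
  | cons x u ih =>
    have ih := ih (fun x hx => hu x (by simp [hx]))
    simp only [List.cons_append, S231]
    rw [ih]
    rcases hu x (by simp) with hx | rfl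
    · rw [des_blk _ _ _ _ _ hx hk]; omega
    · have hu' := hle u (fun x hx => hu x (by simp [hx]))
      have hv' := hle v hv
      rw [des_top, des_top]
      · omega
      · intro y hy
        simp at hy
        rcases hy with hy | rfl | hy
        · exact hu' y hy
        · exact le_rfl
        · exact hv' y hy
      · intro y hy
        have : y = k ∨ y = x ∨ y ∈ u ∨ y ∈ v := by
          cases a <;> cases b <;> simp [blk, opt] at hy <;> tauto
        rcases this with rfl | rfl | hy | hy
        · exact hk.le
        · exact le_rfl
        · exact hu' y hy
        · exact hv' y hy

theorem S312_blk (B k : ℕ) (a b : Bool) (hk : k < B) (u v : List ℕ)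
    (hu : ∀ a ∈ u, a < k ∨ a = B) (hv : ∀ a ∈ v, a < k ∨ a = B)
    (hc : NoBB B (u ++ [B])) :
    S213 (u ++ (blk B k a b ++ v)).reverse = S213 (u ++ B :: v).reverse + u.count B := by
  have hr : (blk B k a b).reverse = blk B k b a := by
    cases a <;> cases b <;> rfl
  have := S213_blk B k b a hk v.reverse u.reverse (by simpa using hv) (by simpa using hu) (by
    have h2 : NoBB B (u ++ [B]).reverse := by
      refine List.isChain_reverse.2 (List.IsChain.imp ?_ hc)
      intro a b h; simpa [flip, and_comm] using h
    simpa using h2)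
  simpa [hr] using this

/-- all ways to write `w = u ++ B :: v` -/
def splits (B : ℕ) : List ℕ → List (List ℕ × List ℕ)
  | [] => []
  | a :: w => (if a = B then [([], w)] else []) ++ (splits B w).map (fun p => (a :: p.1, p.2))

theorem mem_splits (B : ℕ) (w : List ℕ) (p : List ℕ × List ℕ) :
    p ∈ splits B w ↔ w = p.1 ++ B :: p.2 := by
  induction w generalizing p with
  | nil => simp [splits]
  | cons a w ih =>
    obtain ⟨u, v⟩ := p
    cases u with
    | nil => by_cases h : a = B <;> simp [splits, h] <;> grind
    | cons x u =>
      by_cases h : a = B <;> simp [splits, h, ih] <;> grind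

theorem nodup_splits (B : ℕ) (w : List ℕ) : (splits B w).Nodup := by
  induction w with
  | nil => simp [splits]
  | cons a w ih =>
    have hi : Function.Injective (fun p : List ℕ × List ℕ => (a :: p.1, p.2)) := by
      rintro ⟨x, y⟩ ⟨x', y'⟩ h; simpa using h
    have := ih.map hi
    by_cases h : a = B <;> simp [splits, h] <;> subst_vars <;> simpa using this

theorem sum_splits {R : Type*} [CommSemiring R] (B : ℕ) (w : List ℕ) (f : ℕ → ℕ → R) :
    ((splits B w).map (fun p => f (p.1.count B) (p.2.count B))).sum =
      ∑ i ∈ Finset.range (w.count B), f i (w.count B - 1 - i) := by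
  induction w generalizing f with
  | nil => simp [splits]
  | cons a w ih =>
    by_cases h : a = B
    · subst h
      rw [List.count_cons_self, Finset.sum_range_succ']
      have := ih (fun i j => f (i + 1) j)
      simp only [splits, if_true, List.map_append, List.map_map, List.sum_append, List.map_cons, List.map_nil, List.sum_singleton,
        Function.comp_def, List.count_cons_self, List.count_nil]
      rw [this, add_comm]
      refine congrArg₂ (· + ·) (Finset.sum_congr rfl fun i hi => ?_) (by simp)
      congr 1
      omega
    · have := ih f
      simp [splits, h, Function.comp_def, List.count_cons_of_ne h, this]


theorem nobb_split (B : ℕ) (u v : List ℕ) : NoBB B (u ++ B :: v) ↔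
    NoBB B u ∧ NoBB B v ∧ u.getLast? ≠ some B ∧ v.head? ≠ some B := by
  unfold NoBB
  rw [List.isChain_append, List.isChain_cons]
  simp
  grind

theorem nobb_mid (B k : ℕ) (hk : k ≠ B) (x y : List ℕ) : NoBB B (x ++ k :: y) ↔
    NoBB B x ∧ NoBB B y := by
  unfold NoBB
  rw [List.isChain_append, List.isChain_cons]
  simp [hk]

theorem nobb_opt_right (B : ℕ) (a : Bool) (u : List ℕ) (h : NoBB B u) (hl : u.getLast? ≠ some B) :
    NoBB B (u ++ opt B a) := by
  unfold NoBB at *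
  rw [List.isChain_append]
  cases a <;> simp [opt] at h ⊢ <;> first | exact h | exact ⟨h, by grind⟩

theorem nobb_opt_left (B : ℕ) (a : Bool) (u : List ℕ) (h : NoBB B u) (hl : u.head? ≠ some B) :
    NoBB B (opt B a ++ u) := by
  unfold NoBB at *
  rw [List.isChain_append]
  cases a <;> simp [opt] at h ⊢ <;> first | exact h | exact ⟨h, by grind⟩

theorem exists_opt_left (B : ℕ) (y : List ℕ) (h : NoBB B y) :
    ∃ b v, y = opt B b ++ v ∧ NoBB B v ∧ v.head? ≠ some B := by
  by_cases hy : y.head? = some B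
  · cases y with
    | nil => simp at hy
    | cons c y =>
      simp at hy
      subst hy
      have := (nobb_split c [] y).1 (by simpa using h)
      exact ⟨true, y, by simp [opt], this.2.1, this.2.2.2⟩
  · exact ⟨false, y, by simp [opt], h, hy⟩

theorem exists_opt_right (B : ℕ) (x : List ℕ) (h : NoBB B x) :
    ∃ a u, x = u ++ opt B a ∧ NoBB B u ∧ u.getLast? ≠ some B := by
  by_cases hy : x.getLast? = some B
  · rcases List.eq_nil_or_concat x with rfl | ⟨u, c, rfl⟩
    · simp at hy
    · simp at hy
      subst hy
      have := (nobb_split c u []).1 (by simpa using h)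
      exact ⟨true, u, by simp [opt], this.1, this.2.2.1⟩
  · exact ⟨false, x, by simp [opt], h, hy⟩

theorem opt_left_inj (B : ℕ) (b b' : Bool) (v v' : List ℕ) (h : v.head? ≠ some B)
    (h' : v'.head? ≠ some B) (e : opt B b ++ v = opt B b' ++ v') : b = b' ∧ v = v' := by
  cases b <;> cases b' <;> simp [opt] at e ⊢ <;> first | exact e | (subst e; simp at h h')

theorem opt_right_inj (B : ℕ) (b b' : Bool) (v v' : List ℕ) (h : v.getLast? ≠ some B)
    (h' : v'.getLast? ≠ some B) (e : v ++ opt B b = v' ++ opt B b') : b = b' ∧ v = v' := by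
  cases b <;> cases b' <;> simp [opt] at e ⊢ <;> first | exact e | (subst e; simp at h h')

theorem mid_inj (k : ℕ) (x y x' y' : List ℕ) (hx : k ∉ x) (hx' : k ∉ x')
    (e : x ++ k :: y = x' ++ k :: y') : x = x' ∧ y = y' := by
  induction x generalizing x' with
  | nil =>
    cases x' with
    | nil => simpa using e
    | cons a x' => simp at e hx'; omega
  | cons c x ih =>
    cases x' with
    | nil => simp at e hx; omega
    | cons a x' =>
      simp at e hx hx'
      have := ih x' hx.2 hx'.2 e.2
      exact ⟨by rw [e.1, this.1], this.2⟩

structure Good_s9 (B k : ℕ) (w : List ℕ) : Prop where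
  chain : NoBB B w
  ne : w ≠ []
  lt : ∀ a ∈ w, a < k ∨ a = B
  cnt : ∀ a < k, w.count a = 1

def bld (B k : ℕ) (x : (List ℕ × List ℕ) × (Bool × Bool)) : List ℕ :=
  x.1.1 ++ (blk B k x.2.1 x.2.2 ++ x.1.2)

def sset (B : ℕ) (G : Finset (List ℕ)) : Finset (List ℕ × List ℕ) :=
  G.biUnion fun w => (splits B w).toFinset

def GG (B : ℕ) : ℕ → Finset (List ℕ)
  | 0 => {[B]}
  | k + 1 => (sset B (GG B k) ×ˢ (Finset.univ : Finset (Bool × Bool))).image (bld B k)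

theorem mem_sset (B : ℕ) (G : Finset (List ℕ)) (p : List ℕ × List ℕ) :
    p ∈ sset B G ↔ p.1 ++ B :: p.2 ∈ G := by
  simp [sset, mem_splits]

theorem bld_eq (B k : ℕ) (u v : List ℕ) (a b : Bool) :
    bld B k ((u, v), (a, b)) = (u ++ opt B a) ++ k :: (opt B b ++ v) := by
  simp [bld, blk]

theorem good_bld (B k : ℕ) (hk : k < B) (u v : List ℕ) (a b : Bool)
    (h : Good_s9 B k (u ++ B :: v)) : Good_s9 B (k + 1) (bld B k ((u, v), (a, b))) := by
  rw [bld_eq]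
  have hs := (nobb_split B u v).1 h.chain
  have hl : ∀ c, (c ∈ u ∨ c ∈ v) → c < k ∨ c = B := fun c hc => h.lt c (by simp; tauto)
  have hopt : ∀ (d : Bool) c, c ∈ opt B d → c = B := by
    intro d c; cases d <;> simp [opt]
  constructor
  · rw [nobb_mid B k hk.ne]
    exact ⟨nobb_opt_right _ _ _ hs.1 hs.2.2.1, nobb_opt_left _ _ _ hs.2.1 hs.2.2.2⟩
  · simp
  · intro c hc
    simp at hc
    rcases hc with hc | hc | hc | hc | hc
    · have := hl c (Or.inl hc); omega
    · exact Or.inr (hopt _ _ hc)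
    · omega
    · exact Or.inr (hopt _ _ hc)
    · have := hl c (Or.inr hc); omega
  · intro c hc
    have h0 : ∀ d : Bool, (opt B d).count c = 0 := by
      intro d
      refine List.count_eq_zero_of_not_mem fun hm => ?_
      have := hopt _ _ hm
      omega
    simp only [List.count_append, List.count_cons, h0]
    rcases Nat.lt_succ_iff_lt_or_eq.1 hc with hc | rfl
    · have := h.cnt c hc
      simp only [List.count_append, List.count_cons] at this
      have h1 : ¬ (B = c) := by omega
      have h2 : ¬ (k = c) := by omega
      simp [h1, h2] at this ⊢
      exact this
    · have h1 : u.count c = 0 := List.count_eq_zero_of_not_mem fun hm => by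
        have := hl c (Or.inl hm); omega
      have h2 : v.count c = 0 := List.count_eq_zero_of_not_mem fun hm => by
        have := hl c (Or.inr hm); omega
      simp [h1, h2]

theorem good_exists (B k : ℕ) (hk : k < B) (w : List ℕ) (h : Good_s9 B (k + 1) w) :
    ∃ u v a b, w = bld B k ((u, v), (a, b)) ∧ Good_s9 B k (u ++ B :: v) := by
  have hkw : k ∈ w := List.count_pos_iff.1 (by rw [h.cnt k (by omega)]; omega)
  obtain ⟨x, y, rfl⟩ := List.append_of_mem hkw
  have hc := (nobb_mid B k hk.ne x y).1 h.chain
  obtain ⟨a, u, rfl, hu, hu'⟩ := exists_opt_right B x hc.1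
  obtain ⟨b, v, rfl, hv, hv'⟩ := exists_opt_left B y hc.2
  refine ⟨u, v, a, b, (bld_eq _ _ _ _ _ _).symm, ?_⟩
  have hkc := h.cnt k (by omega)
  simp only [List.count_append, List.count_cons] at hkc
  simp at hkc
  have hopt : ∀ (d : Bool) c, c ∈ opt B d → c = B := by
    intro d c; cases d <;> simp [opt]
  have hku : k ∉ u := List.count_eq_zero.1 (by omega)
  have hkv : k ∉ v := List.count_eq_zero.1 (by omega)
  constructor
  · exact (nobb_split B u v).2 ⟨hu, hv, hu', hv'⟩
  · simp
  · intro c hc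
    simp at hc
    rcases hc with hc | hc | hc
    · have := h.lt c (by simp [hc])
      have : c ≠ k := fun e => hku (e ▸ hc)
      omega
    · exact Or.inr hc
    · have := h.lt c (by simp [hc])
      have : c ≠ k := fun e => hkv (e ▸ hc)
      omega
  · intro c hc
    have h0 : ∀ d : Bool, (opt B d).count c = 0 := by
      intro d
      refine List.count_eq_zero_of_not_mem fun hm => ?_
      have := hopt _ _ hm
      omega
    have := h.cnt c (by omega)
    simp only [List.count_append, List.count_cons, h0] at this ⊢
    have h1 : ¬ (B = c) := by omega
    have h2 : ¬ (k = c) := by omega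
    simp [h1, h2] at this ⊢
    exact this

theorem mem_GG (B k : ℕ) (hk : k ≤ B) (w : List ℕ) : w ∈ GG B k ↔ Good_s9 B k w := by
  induction k generalizing w with
  | zero =>
    simp only [GG, Finset.mem_singleton]
    constructor
    · rintro rfl
      exact ⟨by simp [NoBB], by simp, by simp, by simp⟩
    · intro h
      rcases w with _ | ⟨a, _ | ⟨b, w⟩⟩
      · exact absurd rfl h.ne
      · have := h.lt a (by simp); simp at this; rw [this]
      · have h1 := h.lt a (by simp)
        have h2 := h.lt b (by simp)
        have h3 := (List.isChain_cons_cons.1 h.chain).1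
        omega
  | succ k ih =>
    simp only [GG, Finset.mem_image, Finset.mem_product, mem_sset, Finset.mem_univ, and_true,
      ih (by omega)]
    constructor
    · rintro ⟨⟨⟨u, v⟩, ⟨a, b⟩⟩, hg, rfl⟩
      exact good_bld B k hk u v a b hg
    · intro h
      obtain ⟨u, v, a, b, e, hg⟩ := good_exists B k hk w h
      exact ⟨((u, v), (a, b)), hg, e.symm⟩

theorem sum_GG {R : Type*} [CommSemiring R] (B k : ℕ) (hk : k < B) (f : List ℕ → R) :
    ∑ w ∈ GG B (k + 1), f w =
    ∑ w ∈ GG B k, ((splits B w).map fun p => ∑ a : Bool, ∑ b : Bool, f (bld B k (p, (a, b)))).sum := by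
  rw [GG, Finset.sum_image, Finset.sum_product, sset, Finset.sum_biUnion]
  · refine Finset.sum_congr rfl fun w hw => ?_
    rw [List.sum_toFinset _ (nodup_splits B w)]
    simp only [Fintype.sum_prod_type]
  · intro w _ w' _ hne
    rw [Function.onFun, Finset.disjoint_left]
    intro p hp hp'
    simp only [List.mem_toFinset, mem_splits] at hp hp'
    exact hne (hp.trans hp'.symm)
  · rintro ⟨⟨u, v⟩, ⟨a, b⟩⟩ h ⟨⟨u', v'⟩, ⟨a', b'⟩⟩ h' e
    simp only [Finset.coe_product, Set.mem_prod, Finset.mem_coe, mem_sset, mem_GG B k hk.le] at h h'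
    have hs := (nobb_split B u v).1 h.1.chain
    have hs' := (nobb_split B u' v').1 h'.1.chain
    rw [bld_eq, bld_eq] at e
    have hn : ∀ u v : List ℕ, ∀ a : Bool, Good_s9 B k (u ++ B :: v) → k ∉ u ++ opt B a := by
      intro u v a hg hm
      have : k ∈ u ++ B :: v := by
        cases a <;> simp [opt] at hm ⊢ <;> tauto
      have := hg.lt k this
      omega
    obtain ⟨e1, e2⟩ := mid_inj k _ _ _ _ (hn u v a h.1) (hn u' v' a' h'.1) e
    obtain ⟨rfl, rfl⟩ := opt_right_inj _ _ _ _ _ hs.2.2.1 hs'.2.2.1 e1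
    obtain ⟨rfl, rfl⟩ := opt_left_inj _ _ _ _ _ hs.2.2.2 hs'.2.2.2 e2
    rfl
end words

section final
variable {R : Type*} [CommSemiring R]

def wt (q r s : R) (w : List ℕ) : R := q ^ S213 w.reverse * r ^ S213 w * s ^ S231 w

theorem endsB_mid (B k : ℕ) (hk : k ≠ B) (x y : List ℕ) : endsB B (x ++ k :: y) = endsB B y := by
  rcases List.eq_nil_or_concat y with rfl | ⟨u, c, rfl⟩
  · simp [endsB, hk]
  · have : x ++ k :: (u.concat c) = (x ++ k :: u) ++ [c] := by simp
    rw [this]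
    simp [endsB, -List.append_assoc]

theorem nf_eq (B : ℕ) (u v : List ℕ) (b : Bool) :
    nf (endsB B (u ++ B :: v)) (v.count B) b = endsB B (opt B b ++ v) := by
  rcases List.eq_nil_or_concat v with rfl | ⟨v, c, rfl⟩
  · cases b <;> simp [endsB, nf, opt]
  · have h1 : u ++ B :: (v.concat c) = (u ++ B :: v) ++ [c] := by simp
    have h2 : opt B b ++ v.concat c = (opt B b ++ v) ++ [c] := by simp
    rw [h1, h2]
    by_cases h : c = B <;> simp [endsB, nf, h, -List.append_assoc]

theorem step (q r s : R) (B k j : ℕ) (hk : k < B) (u v : List ℕ) (a b : Bool)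
    (h : Good_s9 B k (u ++ B :: v)) :
    wt q r s (bld B k ((u, v), (a, b))) *
      phi q r s j ((bld B k ((u, v), (a, b))).count B) (endsB B (bld B k ((u, v), (a, b)))) =
    wt q r s (u ++ B :: v) * (q ^ u.count B * r ^ v.count B *
      s ^ (v.count B + b.toNat - (nf (endsB B (u ++ B :: v)) (v.count B) b).toNat) *
      phi q r s j ((u ++ B :: v).count B - 1 + a.toNat + b.toNat)
        (nf (endsB B (u ++ B :: v)) (v.count B) b)) := by
  have hu : ∀ c ∈ u, c < k ∨ c = B := fun c hc => h.lt c (by simp [hc])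
  have hv : ∀ c ∈ v, c < k ∨ c = B := fun c hc => h.lt c (by simp [hc])
  have hs := (nobb_split B u v).1 h.chain
  have h1 := S213_blk B k a b hk u v hu hv (nobb_opt_left B true v hs.2.1 hs.2.2.2)
  have h2 := S231_blk B k a b hk u v hu hv (nobb_opt_left B true v hs.2.1 hs.2.2.2)
  have h3 := S312_blk B k a b hk u v hu hv (nobb_opt_right B true u hs.1 hs.2.2.1)
  have h4 : endsB B (bld B k ((u, v), (a, b))) = endsB B (opt B b ++ v) := by
    rw [bld_eq, endsB_mid B k hk.ne]
  have h5 : (bld B k ((u, v), (a, b))).count B = (u ++ B :: v).count B - 1 + a.toNat + b.toNat := by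
    have ho : ∀ d, (opt B d).count B = d.toNat := by intro d; cases d <;> simp [opt]
    rw [bld_eq]
    simp [List.count_append, List.count_cons, ho, hk.ne]
    omega
  rw [h4, h5, nf_eq, wt, bld, h1, h2, h3, wt, pow_add, pow_add, pow_add]
  ring

theorem sum_step (q r s : R) (B k j : ℕ) (hk : k < B) :
    ∑ w ∈ GG B (k + 1), wt q r s w * phi q r s j (w.count B) (endsB B w) =
    ∑ w ∈ GG B k, wt q r s w * phi q r s (j + 1) (w.count B) (endsB B w) := by
  rw [sum_GG B k hk]
  refine Finset.sum_congr rfl fun w hw => ?_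
  have hg := (mem_GG B k hk.le w).1 hw
  have hs := sum_splits B w (fun i R' => ∑ a : Bool, ∑ b : Bool,
      q ^ i * r ^ R' * s ^ (R' + b.toNat - (nf (endsB B w) R' b).toNat) *
        phi q r s j (w.count B - 1 + a.toNat + b.toNat) (nf (endsB B w) R' b))
  rw [phi, ← hs, ← List.sum_map_mul_left]
  congr 1
  refine List.map_congr_left ?_
  rintro ⟨u, v⟩ hp
  have hw' := (mem_splits B w (u, v)).1 hp
  simp only at hw'
  subst hw'
  simp only [Finset.mul_sum]
  refine Finset.sum_congr rfl fun a _ => Finset.sum_congr rfl fun b _ => ?_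
  exact step q r s B k j hk u v a b hg

theorem sum_total (q r s : R) (n k j : ℕ) (h : k + j = n) :
    ∑ w ∈ GG n k, wt q r s w * phi q r s j (w.count n) (endsB n w) = phi q r s n 1 true := by
  induction k generalizing j with
  | zero =>
    obtain rfl : j = n := by omega
    simp [GG, wt, S213, S231, asc, des, endsB]
  | succ k ih => rw [sum_step _ _ _ _ _ _ (by omega), ih (j + 1) (by omega)]

theorem asc_eq (c : ℕ) (l : List ℕ) : asc c l = ∑ j ∈ Finset.range l.length,
    if j + 1 < l.length ∧ l.getD j 0 < c ∧ c < l.getD (j + 1) 0 then 1 else 0 := by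
  induction l with
  | nil => rfl
  | cons a l ih =>
    cases l with
    | nil => simp [asc]
    | cons b l =>
      rw [List.length_cons, Finset.sum_range_succ', asc, ih, add_comm]
      simp

theorem des_eq (c : ℕ) (l : List ℕ) : des c l = ∑ j ∈ Finset.range l.length,
    if j + 1 < l.length ∧ l.getD (j + 1) 0 < c ∧ c < l.getD j 0 then 1 else 0 := by
  induction l with
  | nil => rfl
  | cons a l ih =>
    cases l with
    | nil => simp [des]
    | cons b l =>
      rw [List.length_cons, Finset.sum_range_succ', des, ih, add_comm]
      simp

theorem S213_eq (l : List ℕ) : S213 l = ∑ p ∈ Finset.range l.length,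
    ∑ j ∈ Finset.range l.length, if p < j ∧ j + 1 < l.length ∧ l.getD j 0 < l.getD p 0 ∧
      l.getD p 0 < l.getD (j + 1) 0 then 1 else 0 := by
  induction l with
  | nil => rfl
  | cons a l ih =>
    rw [List.length_cons, Finset.sum_range_succ', S213, ih, add_comm, asc_eq]
    congr 1
    · refine Finset.sum_congr rfl fun p _ => ?_
      rw [Finset.sum_range_succ']
      simp
    · rw [Finset.sum_range_succ']
      simp

theorem S231_eq (l : List ℕ) : S231 l = ∑ p ∈ Finset.range l.length,
    ∑ j ∈ Finset.range l.length, if p < j ∧ j + 1 < l.length ∧ l.getD (j + 1) 0 < l.getD p 0 ∧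
      l.getD p 0 < l.getD j 0 then 1 else 0 := by
  induction l with
  | nil => rfl
  | cons a l ih =>
    rw [List.length_cons, Finset.sum_range_succ', S231, ih, add_comm, des_eq]
    congr 1
    · refine Finset.sum_congr rfl fun p _ => ?_
      rw [Finset.sum_range_succ']
      simp
    · rw [Finset.sum_range_succ']
      simp

def wd {n : ℕ} (σ : Equiv.Perm (Fin n)) : List ℕ := List.ofFn fun i => ((σ i : Fin n) : ℕ)

theorem valAt_pv {n : ℕ} (f : Fin n → Fin n) (j : Fin n) : valAt f (pv j) = (f j : ℕ) + 1 := by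
  have := j.isLt
  rw [valAt, dif_pos (by simp only [pv]; omega)]
  simp [pv]

theorem valAt_lt {n : ℕ} (f : Fin n → Fin n) (j : ℕ) (h : j < n) :
    valAt f (j + 1) = (f ⟨j, h⟩ : ℕ) + 1 := valAt_pv f ⟨j, h⟩

theorem wd_getD {n : ℕ} (σ : Equiv.Perm (Fin n)) (j : ℕ) (h : j < n) :
    (wd σ).getD j 0 = (σ ⟨j, h⟩ : ℕ) := by
  simp [wd, List.getD, h]

theorem stat2_13_eq_s9 {n : ℕ} (σ : Equiv.Perm (Fin n)) : stat2_13 σ = S213 (wd σ) := by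
  have hl : (wd σ).length = n := by simp [wd]
  rw [S213_eq, hl, Finset.sum_range, stat2_13, Finset.card_filter, Fintype.sum_prod_type,
    ← Equiv.sum_comp σ]
  refine Finset.sum_congr rfl fun p _ => ?_
  rw [Finset.sum_range]
  refine Finset.sum_congr rfl fun j _ => ?_
  refine if_congr ?_ rfl rfl
  by_cases h : (j : ℕ) + 1 < n
  · rw [wd_getD σ p p.isLt, wd_getD σ j j.isLt, wd_getD σ _ h, valAt_pv]
    simp only [pv, Equiv.symm_apply_apply]
    rw [valAt_lt σ _ h]
    simp
  · simp [pv, h]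

theorem stat2_31_eq_s9 {n : ℕ} (σ : Equiv.Perm (Fin n)) : stat2_31 σ = S231 (wd σ) := by
  have hl : (wd σ).length = n := by simp [wd]
  rw [S231_eq, hl, Finset.sum_range, stat2_31, Finset.card_filter, Fintype.sum_prod_type,
    ← Equiv.sum_comp σ]
  refine Finset.sum_congr rfl fun p _ => ?_
  rw [Finset.sum_range]
  refine Finset.sum_congr rfl fun j _ => ?_
  refine if_congr ?_ rfl rfl
  by_cases h : (j : ℕ) + 1 < n
  · rw [wd_getD σ p p.isLt, wd_getD σ j j.isLt, wd_getD σ _ h, valAt_pv]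
    simp only [pv, Equiv.symm_apply_apply]
    rw [valAt_lt σ _ h]
    simp
  · simp [pv, h]

theorem wd_reverse {n : ℕ} (σ : Equiv.Perm (Fin n)) :
    (wd σ).reverse = wd (Fin.revPerm.trans σ) := by
  refine List.ext_getElem (by simp [wd]) ?_
  intro i h1 h2
  simp only [wd, List.getElem_reverse, List.getElem_ofFn, List.length_ofFn]
  have h3 : i < n := by simpa [wd] using h2
  have h4 : (⟨n - 1 - i, by omega⟩ : Fin n) = Fin.rev ⟨i, h3⟩ := by
    ext
    simp only [Fin.val_rev]
    omega
  rw [h4]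
  rfl

theorem stat31_2_eq_s9 {n : ℕ} (σ : Equiv.Perm (Fin n)) : stat31_2 σ = S213 (wd σ).reverse := by
  rw [wd_reverse, ← stat2_13_eq_s9, stat31_2, stat2_13, Finset.card_filter, Finset.card_filter,
    Fintype.sum_prod_type, Fintype.sum_prod_type]
  refine Finset.sum_congr rfl fun l _ => ?_
  rw [← Equiv.sum_comp Fin.revPerm]
  refine Finset.sum_congr rfl fun j _ => ?_
  refine if_congr ?_ rfl rfl
  have hj := j.isLt
  have hl := (σ.symm l).isLt
  by_cases h : (j : ℕ) + 1 < n
  · have h1 : pv (Fin.revPerm j) - 1 = n - 2 - j + 1 := by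
      simp [pv, Fin.val_rev]; omega
    rw [h1, valAt_lt _ _ (by omega), valAt_pv, valAt_pv]
    simp only [pv]
    rw [valAt_lt _ _ h]
    have h2 : (Fin.rev (⟨(j : ℕ) + 1, h⟩ : Fin n)) = ⟨n - 2 - j, by omega⟩ := by
      ext; simp [Fin.val_rev]; omega
    simp [Fin.val_rev, h2]
    omega
  · simp [pv, h, Fin.val_rev] <;> omega

theorem good_wd {n : ℕ} (σ : Equiv.Perm (Fin n)) (hn : 0 < n) : Good_s9 n n (wd σ) := by
  have hm : ∀ a ∈ wd σ, a < n := by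
    intro a ha
    simp [wd, List.mem_ofFn] at ha
    obtain ⟨i, rfl⟩ := ha
    exact (σ i).isLt
  have hnd : (wd σ).Nodup := by
    rw [wd, List.nodup_ofFn]
    exact Fin.val_injective.comp σ.injective
  constructor
  · rw [NoBB, List.isChain_iff_getElem]
    intro i hi h
    have := hm _ (List.getElem_mem (l := wd σ) (n := i) (by omega))
    omega
  · intro h
    have := congrArg List.length h
    simp [wd] at this
    omega
  · exact fun a ha => Or.inl (hm a ha)
  · intro a ha
    refine List.count_eq_one_of_mem hnd ?_
    simp only [wd, List.mem_ofFn]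
    exact ⟨σ.symm ⟨a, ha⟩, by simp⟩

theorem exists_wd {n : ℕ} (w : List ℕ) (h : Good_s9 n n w) (h0 : w.count n = 0) :
    ∃ σ : Equiv.Perm (Fin n), wd σ = w := by
  have hlt : ∀ a ∈ w, a < n := by
    intro a ha
    rcases h.lt a ha with h1 | rfl
    · exact h1
    · exact absurd ha (List.count_eq_zero.1 h0)
  have hp : w.Perm (List.range n) := by
    rw [List.perm_iff_count]
    intro a
    by_cases ha : a < n
    · rw [h.cnt a ha, List.count_eq_one_of_mem List.nodup_range (List.mem_range.2 ha)]
    · rw [List.count_eq_zero_of_not_mem (fun hm => ha (hlt a hm)),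
        List.count_eq_zero_of_not_mem (fun hm => ha (List.mem_range.1 hm))]
  have hlen : w.length = n := by simpa using hp.length_eq
  have hnd : w.Nodup := hp.nodup_iff.2 List.nodup_range
  let f : Fin n → Fin n := fun i => ⟨w[(i : ℕ)]'(by rw [hlen]; exact i.isLt), hlt _ (List.getElem_mem _)⟩
  have hf : Function.Injective f := by
    intro i j hij
    simp only [f, Fin.mk.injEq] at hij
    exact Fin.ext ((hnd.getElem_inj_iff).1 hij)
  refine ⟨Equiv.ofBijective f (Finite.injective_iff_bijective.1 hf), ?_⟩
  refine List.ext_getElem (by simp [wd, hlen]) ?_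
  intro i h1 h2
  simp [wd, f]

theorem sum_perm (q r s : R) (n : ℕ) (hn : 0 < n) :
    ∑ σ : Equiv.Perm (Fin n), q ^ stat31_2 σ * r ^ stat2_13 σ * s ^ stat2_31 σ =
      phi q r s n 1 true := by
  rw [← sum_total q r s n n 0 (by omega)]
  simp only [phi, mul_ite, mul_one, mul_zero]
  rw [← Finset.sum_filter]
  refine Finset.sum_nbij wd ?_ ?_ ?_ ?_
  · intro σ _
    rw [Finset.mem_filter, mem_GG n n le_rfl]
    refine ⟨good_wd σ hn, List.count_eq_zero_of_not_mem ?_⟩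
    simp only [wd, List.mem_ofFn, not_exists]
    intro i
    exact (σ i).isLt.ne
  · intro σ _ τ _ h
    have := List.ofFn_injective h
    exact Equiv.ext fun i => Fin.ext (congrFun this i)
  · intro w hw
    simp only [Finset.coe_filter, Set.mem_ofPred_eq, mem_GG n n le_rfl] at hw
    obtain ⟨σ, hσ⟩ := exists_wd w hw.1 hw.2
    exact ⟨σ, by simp, hσ⟩
  · intro σ _
    rw [stat31_2_eq_s9, stat2_13_eq_s9, stat2_31_eq_s9, wt]

end final

/-- (\underline{31}2, 2\underline{13}, 2\underline{31}) is equidistributed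
with (\underline{31}2, 2\underline{31}, 2\underline{13}) on Sₙ. -/
theorem trivariate_symmetry (n : ℕ) (R : Type*) [CommSemiring R] (q r s : R) :
    ∑ σ : Equiv.Perm (Fin n), q ^ stat31_2 σ * r ^ stat2_13 σ * s ^ stat2_31 σ =
    ∑ σ : Equiv.Perm (Fin n), q ^ stat31_2 σ * r ^ stat2_31 σ * s ^ stat2_13 σ := by
  rcases Nat.eq_zero_or_pos n with rfl | hn
  · refine Finset.sum_congr rfl fun σ _ => ?_
    simp [stat2_13, stat2_31]
  · have h : ∑ σ : Equiv.Perm (Fin n), q ^ stat31_2 σ * r ^ stat2_31 σ * s ^ stat2_13 σ =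
        ∑ σ : Equiv.Perm (Fin n), q ^ stat31_2 σ * s ^ stat2_13 σ * r ^ stat2_31 σ :=
      Finset.sum_congr rfl fun σ _ => by ring
    rw [h, sum_perm q r s n hn, sum_perm q s r n hn, phi_symm]

end Paper
end
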